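/- Let Γ be a group and R a Γ-graded ring. There exist a Γ-graded division ring K and a homomorphism of Γ-graded rings φ : R → K if and only if no identity matrix can be expressed as an iterated determinantal sum of square homogeneous matrices over R that are not gr-full. -/

import Mathlib

open Matrix

universe u v w

section GradedDefs

variable {Γ : Type u} [Group Γ] {R : Type v} [Ring R]

/-- `A` is a homogeneous matrix of distribution `(α, β)`:
its `(i,j)` entry lies in `𝒜 (α i * (β j)⁻¹)`. -/
def IsHomog (𝒜 : Γ → AddSubgroup R) {m n : ℕ}
    (A : Matrix (Fin m) (Fin n) R) (α : Fin m → Γ) (β : Fin n → Γ) : Prop :=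
  ∀ i j, A i j ∈ 𝒜 (α i * (β j)⁻¹)

/-- `A` is a homogeneous matrix for some distribution. -/
def IsHomogSq (𝒜 : Γ → AddSubgroup R) {m n : ℕ}
    (A : Matrix (Fin m) (Fin n) R) : Prop :=
  ∃ (α : Fin m → Γ) (β : Fin n → Γ), IsHomog 𝒜 A α β

end GradedDefs

/-- Square matrices over `R` of arbitrary finite size. -/
abbrev SqMat (R : Type v) : Type v := Σ n : ℕ, Matrix (Fin n) (Fin n) R

section GradedDefs

variable {Γ : Type u} [Group Γ] {R : Type v} [Ring R]

/-- Diagonal sum `A ⊕ B` of two (rectangular) matrices. -/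
def diagSum {m n m' n' : ℕ} (A : Matrix (Fin m) (Fin n) R)
    (B : Matrix (Fin m') (Fin n') R) : Matrix (Fin (m + m')) (Fin (n + n')) R :=
  Matrix.reindex finSumFinEquiv finSumFinEquiv (Matrix.fromBlocks A 0 0 B)

/-- Block lower triangular matrix `[[A, 0], [C, B]]`. -/
def lowerBlockSum {n m : ℕ} (A : Matrix (Fin n) (Fin n) R) (B : Matrix (Fin m) (Fin m) R)
    (C : Matrix (Fin m) (Fin n) R) : Matrix (Fin (n + m)) (Fin (n + m)) R :=
  Matrix.reindex finSumFinEquiv finSumFinEquiv (Matrix.fromBlocks A 0 C B)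

/-- Block upper triangular matrix `[[A, C], [0, B]]` with rectangular blocks. -/
def upperBlockSum {m n m' n' : ℕ} (A : Matrix (Fin m) (Fin n) R)
    (B : Matrix (Fin m') (Fin n') R) (C : Matrix (Fin m) (Fin n') R) :
    Matrix (Fin (m + m')) (Fin (n + n')) R :=
  Matrix.reindex finSumFinEquiv finSumFinEquiv (Matrix.fromBlocks A C 0 B)

/-- `C` is the determinantal sum of `A` and `B` with respect to some column or row:
`A` and `B` agree away from that column (row) and the distinguished column (row) of `C`
is the sum of the corresponding columns (rows) of `A` and `B`. -/
def IsDetSum {n : ℕ} (A B C : Matrix (Fin n) (Fin n) R) : Prop :=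
  (∃ c : Fin n, (∀ i j, j ≠ c → A i j = B i j) ∧
      ∀ i j, C i j = if j = c then A i j + B i j else A i j) ∨
  (∃ r : Fin n, (∀ i j, i ≠ r → A i j = B i j) ∧
      ∀ i j, C i j = if i = r then A i j + B i j else A i j)

/-- `C` is the determinantal sum of the homogeneous matrices `A` and `B`
(which have a common distribution). -/
def GrDetSum (𝒜 : Γ → AddSubgroup R) {n : ℕ} (A B C : Matrix (Fin n) (Fin n) R) : Prop :=
  (∃ α β : Fin n → Γ, IsHomog 𝒜 A α β ∧ IsHomog 𝒜 B α β) ∧ IsDetSum A B C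

/-- A square homogeneous matrix `A` is gr-full if whenever `A = P * Q` with `P`
homogeneous of distribution `(α, lam)` and `Q` homogeneous of distribution `(lam, β)`
where `lam` has length `r`, then `r ≥ n`. -/
def IsGrFull (𝒜 : Γ → AddSubgroup R) {n : ℕ} (A : Matrix (Fin n) (Fin n) R) : Prop :=
  ∀ (r : ℕ) (P : Matrix (Fin n) (Fin r) R) (Q : Matrix (Fin r) (Fin n) R)
    (α : Fin n → Γ) (lam : Fin r → Γ) (β : Fin n → Γ),
    IsHomog 𝒜 P α lam → IsHomog 𝒜 Q lam β → A = P * Q → n ≤ r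

/-- gr-prime matrix ideal: a set of square homogeneous matrices satisfying (PM1)–(PM6). -/
structure IsGrPrimeMatrixIdeal (𝒜 : Γ → AddSubgroup R) (P : Set (SqMat R)) : Prop where
  subset_homog : ∀ p ∈ P, IsHomogSq 𝒜 p.2
  pm1 : ∀ {n : ℕ} (A : Matrix (Fin n) (Fin n) R),
    IsHomogSq 𝒜 A → ¬ IsGrFull 𝒜 A → (⟨n, A⟩ : SqMat R) ∈ P
  pm2 : ∀ {n : ℕ} (A B C : Matrix (Fin n) (Fin n) R),
    (⟨n, A⟩ : SqMat R) ∈ P → (⟨n, B⟩ : SqMat R) ∈ P → GrDetSum 𝒜 A B C →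
    (⟨n, C⟩ : SqMat R) ∈ P
  pm3 : ∀ {m n : ℕ} (A : Matrix (Fin m) (Fin m) R) (B : Matrix (Fin n) (Fin n) R),
    (⟨m, A⟩ : SqMat R) ∈ P → IsHomogSq 𝒜 B → (⟨m + n, diagSum A B⟩ : SqMat R) ∈ P
  pm4 : ∀ {m n : ℕ} (A : Matrix (Fin m) (Fin m) R) (B : Matrix (Fin n) (Fin n) R),
    IsHomogSq 𝒜 A → IsHomogSq 𝒜 B → (⟨m + n, diagSum A B⟩ : SqMat R) ∈ P →
    (⟨m, A⟩ : SqMat R) ∈ P ∨ (⟨n, B⟩ : SqMat R) ∈ P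
  pm5 : (⟨1, (1 : Matrix (Fin 1) (Fin 1) R)⟩ : SqMat R) ∉ P
  pm6 : ∀ {n : ℕ} (A : Matrix (Fin n) (Fin n) R) (e f : Equiv.Perm (Fin n)),
    (⟨n, A⟩ : SqMat R) ∈ P → (⟨n, A.submatrix ⇑e ⇑f⟩ : SqMat R) ∈ P

/-- gr-matrix ideal: a set of square homogeneous matrices satisfying (I1)–(I5). -/
structure IsGrMatrixIdeal (𝒜 : Γ → AddSubgroup R) (I : Set (SqMat R)) : Prop where
  subset_homog : ∀ p ∈ I, IsHomogSq 𝒜 p.2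
  i1 : ∀ {n : ℕ} (A : Matrix (Fin n) (Fin n) R),
    IsHomogSq 𝒜 A → ¬ IsGrFull 𝒜 A → (⟨n, A⟩ : SqMat R) ∈ I
  i2 : ∀ {n : ℕ} (A B C : Matrix (Fin n) (Fin n) R),
    (⟨n, A⟩ : SqMat R) ∈ I → (⟨n, B⟩ : SqMat R) ∈ I → GrDetSum 𝒜 A B C →
    (⟨n, C⟩ : SqMat R) ∈ I
  i3 : ∀ {m n : ℕ} (A : Matrix (Fin m) (Fin m) R) (B : Matrix (Fin n) (Fin n) R),
    (⟨m, A⟩ : SqMat R) ∈ I → IsHomogSq 𝒜 B → (⟨m + n, diagSum A B⟩ : SqMat R) ∈ I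
  i4 : ∀ {n : ℕ} (A : Matrix (Fin n) (Fin n) R) (e f : Equiv.Perm (Fin n)),
    (⟨n, A⟩ : SqMat R) ∈ I → (⟨n, A.submatrix ⇑e ⇑f⟩ : SqMat R) ∈ I
  i5 : ∀ {n : ℕ} (A : Matrix (Fin n) (Fin n) R),
    (⟨n + 1, diagSum A (1 : Matrix (Fin 1) (Fin 1) R)⟩ : SqMat R) ∈ I →
    (⟨n, A⟩ : SqMat R) ∈ I

/-- The diagonal sum of `r` copies of `A`. -/
def diagIter {n : ℕ} (A : Matrix (Fin n) (Fin n) R) :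
    (r : ℕ) → Matrix (Fin (n * r)) (Fin (n * r)) R
  | 0 => 0
  | r + 1 => diagSum (diagIter A r) A

/-- Iterated determinantal sums (with arbitrary bracketing) of elements of `W`. -/
inductive IsDetSumOf (𝒜 : Γ → AddSubgroup R) (W : Set (SqMat R)) : SqMat R → Prop
  | base (p : SqMat R) (hp : p ∈ W) : IsDetSumOf 𝒜 W p
  | step {n : ℕ} (A B C : Matrix (Fin n) (Fin n) R)
      (hA : IsDetSumOf 𝒜 W ⟨n, A⟩) (hB : IsDetSumOf 𝒜 W ⟨n, B⟩)
      (h : GrDetSum 𝒜 A B C) : IsDetSumOf 𝒜 W ⟨n, C⟩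

/-- The homogeneous rational closure of degree `γ`: entries `(j,i)` of inverses of matrices
`A^f` with `A ∈ Sig` homogeneous of distribution `(α, β)` and `β j * (α i)⁻¹ = γ`. -/
def RatCl (𝒜 : Γ → AddSubgroup R) {S : Type w} [Ring S] (Sig : Set (SqMat R)) (f : R →+* S)
    (γ : Γ) : Set S :=
  {x | ∃ (n : ℕ) (A : Matrix (Fin n) (Fin n) R) (α β : Fin n → Γ) (i j : Fin n)
        (B : Matrix (Fin n) (Fin n) S),
      (⟨n, A⟩ : SqMat R) ∈ Sig ∧ IsHomog 𝒜 A α β ∧ β j * (α i)⁻¹ = γ ∧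
      (A.map ⇑f) * B = 1 ∧ B * (A.map ⇑f) = 1 ∧ B j i = x}

/-- gr-lower semimultiplicative set of square homogeneous matrices. -/
def IsGrLowerSemimult (𝒜 : Γ → AddSubgroup R) (Sig : Set (SqMat R)) : Prop :=
  ((⟨1, (1 : Matrix (Fin 1) (Fin 1) R)⟩ : SqMat R) ∈ Sig) ∧
  ∀ {n m : ℕ} (A : Matrix (Fin n) (Fin n) R) (B : Matrix (Fin m) (Fin m) R)
    (α β : Fin n → Γ) (α' β' : Fin m → Γ) (C : Matrix (Fin m) (Fin n) R),
    (⟨n, A⟩ : SqMat R) ∈ Sig → (⟨m, B⟩ : SqMat R) ∈ Sig →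
    IsHomog 𝒜 A α β → IsHomog 𝒜 B α' β' → IsHomog 𝒜 C α' β →
    (⟨n + m, lowerBlockSum A B C⟩ : SqMat R) ∈ Sig

end GradedDefs

/-- A homomorphism of `Γ`-graded rings from `(R, 𝒜)` to a `Γ`-graded division ring. -/
structure GrDivRingHom (Γ : Type u) [Group Γ] [DecidableEq Γ] (R : Type v) [Ring R]
    (𝒜 : Γ → AddSubgroup R) where
  K : Type (max u v)
  [ringK : Ring K]
  [nontrivialK : Nontrivial K]
  grading : Γ → AddSubgroup K
  internal : DirectSum.IsInternal grading
  one_mem : (1 : K) ∈ grading 1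
  mul_mem : ∀ {γ δ : Γ} {x y : K}, x ∈ grading γ → y ∈ grading δ → x * y ∈ grading (γ * δ)
  isUnit_of_ne : ∀ {γ : Γ} {x : K}, x ∈ grading γ → x ≠ 0 → IsUnit x
  φ : R →+* K
  map_mem : ∀ {γ : Γ} {r : R}, r ∈ 𝒜 γ → φ r ∈ grading γ

attribute [instance] GrDivRingHom.ringK GrDivRingHom.nontrivialK

/-!
If `φ : R → K` is a graded homomorphism to a graded division ring, then a homogeneous matrix that is
not gr-full has a singular image: one of its factors has more columns than rows, so it kills a
nonzero homogeneous vector. Over `K` the singular homogeneous matrices are closed under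
determinantal sums: combining kernel vectors of `A` and `B`, normalized at the distinguished column,
gives a kernel vector of `A ∇ B`. So no identity matrix is a determinantal sum of non-gr-full ones.

Conversely, following Cohn and Malcolmson, the determinantal sums of matrices that are not gr-full
are closed under determinantal sums and under diagonal sums with homogeneous matrices. If they
contain no identity matrix, then Zorn's lemma yields a maximal such set `P` containing no identity
matrix, and maximality makes `P` a gr-prime matrix ideal. The elements of the graded division ring
are the fractions `F * A⁻¹ * X` with `A ∉ P`, where `F * A⁻¹ * X` vanishes iff the bordered matrix
`[A, X; F, 0]` lies in `P`.
-/

/-! ### Homogeneous matrices over arbitrary index types -/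

section Grading

variable {Γ : Type u} [Group Γ] {R : Type v} [Ring R]

/-- A family of additive subgroups indexed by a multiplicative group which contains `1` and is
compatible with products: the multiplicatively indexed counterpart of `SetLike.GradedMonoid`. -/
class IsMulGrading (𝒜 : Γ → AddSubgroup R) : Prop where
  one_mem : (1 : R) ∈ 𝒜 1
  mul_mem : ∀ {γ δ : Γ} {x y : R}, x ∈ 𝒜 γ → y ∈ 𝒜 δ → x * y ∈ 𝒜 (γ * δ)

/-- `IsHomog` for matrices indexed by arbitrary types. -/
def IsHomogMatrix (𝒜 : Γ → AddSubgroup R) {m n : Type*} (A : Matrix m n R) (α : m → Γ)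
    (β : n → Γ) : Prop :=
  ∀ i j, A i j ∈ 𝒜 (α i * (β j)⁻¹)

end Grading

namespace IsHomogMatrix

variable {Γ : Type u} [Group Γ] {R : Type v} [Ring R] {𝒜 : Γ → AddSubgroup R}
  {m n k l : Type*} {α : m → Γ} {β : n → Γ} {α' : k → Γ} {β' : l → Γ}

theorem zero : IsHomogMatrix 𝒜 (0 : Matrix m n R) α β :=
  fun _ _ => zero_mem _

theorem neg {A : Matrix m n R} (hA : IsHomogMatrix 𝒜 A α β) : IsHomogMatrix 𝒜 (-A) α β :=
  fun i j => neg_mem (hA i j)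

theorem add {A B : Matrix m n R} (hA : IsHomogMatrix 𝒜 A α β) (hB : IsHomogMatrix 𝒜 B α β) :
    IsHomogMatrix 𝒜 (A + B) α β :=
  fun i j => add_mem (hA i j) (hB i j)

theorem sum {σ : Type*} {s : Finset σ} {A : σ → Matrix m n R}
    (hA : ∀ x ∈ s, IsHomogMatrix 𝒜 (A x) α β) : IsHomogMatrix 𝒜 (∑ x ∈ s, A x) α β := by
  intro i j
  rw [Matrix.sum_apply]
  exact sum_mem fun x hx => hA x hx i j

theorem sub {A B : Matrix m n R} (hA : IsHomogMatrix 𝒜 A α β) (hB : IsHomogMatrix 𝒜 B α β) :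
    IsHomogMatrix 𝒜 (A - B) α β :=
  fun i j => sub_mem (hA i j) (hB i j)

theorem submatrix {A : Matrix m n R} (hA : IsHomogMatrix 𝒜 A α β) (e : k → m) (f : l → n) :
    IsHomogMatrix 𝒜 (A.submatrix e f) (α ∘ e) (β ∘ f) :=
  fun i j => hA (e i) (f j)

theorem fromBlocks {A : Matrix m n R} {B : Matrix m l R} {C : Matrix k n R} {D : Matrix k l R}
    (hA : IsHomogMatrix 𝒜 A α β) (hB : IsHomogMatrix 𝒜 B α β') (hC : IsHomogMatrix 𝒜 C α' β)
    (hD : IsHomogMatrix 𝒜 D α' β') :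
    IsHomogMatrix 𝒜 (fromBlocks A B C D) (Sum.elim α α') (Sum.elim β β') :=
  Sum.rec (fun i => Sum.rec (hA i) (hB i)) fun i => Sum.rec (hC i) (hD i)

theorem fromRows {A : Matrix m n R} {C : Matrix k n R} (hA : IsHomogMatrix 𝒜 A α β)
    (hC : IsHomogMatrix 𝒜 C α' β) : IsHomogMatrix 𝒜 (fromRows A C) (Sum.elim α α') β :=
  Sum.rec hA hC

theorem fromCols {A : Matrix m n R} {B : Matrix m l R} (hA : IsHomogMatrix 𝒜 A α β)
    (hB : IsHomogMatrix 𝒜 B α β') : IsHomogMatrix 𝒜 (fromCols A B) α (Sum.elim β β') :=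
  fun i => Sum.rec (hA i) (hB i)

theorem updateCol [DecidableEq n] {A : Matrix m n R} (hA : IsHomogMatrix 𝒜 A α β) {c : n}
    {x : m → R} (hx : ∀ i, x i ∈ 𝒜 (α i * (β c)⁻¹)) :
    IsHomogMatrix 𝒜 (A.updateCol c x) α β := by
  intro i j
  obtain rfl | hj := eq_or_ne j c
  · simpa using hx i
  · simpa [hj] using hA i j

theorem mul_right {A : Matrix m n R} (hA : IsHomogMatrix 𝒜 A α β) (δ : Γ) :
    IsHomogMatrix 𝒜 A (fun i => α i * δ) fun j => β j * δ := by
  intro i j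
  have key : α i * δ * (β j * δ)⁻¹ = α i * (β j)⁻¹ := by group
  rw [key]
  exact hA i j

theorem one [IsMulGrading 𝒜] [DecidableEq m] : IsHomogMatrix 𝒜 (1 : Matrix m m R) α α := by
  intro i j
  obtain rfl | hij := eq_or_ne i j
  · simpa using IsMulGrading.one_mem
  · simp [hij]

theorem mul [IsMulGrading 𝒜] [Fintype n] {A : Matrix m n R} {B : Matrix n l R}
    (hA : IsHomogMatrix 𝒜 A α β) (hB : IsHomogMatrix 𝒜 B β β') :
    IsHomogMatrix 𝒜 (A * B) α β' := by
  refine fun i j => sum_mem fun x _ => ?_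
  have key : α i * (β' j)⁻¹ = α i * (β x)⁻¹ * (β x * (β' j)⁻¹) := by group
  rw [key]
  exact IsMulGrading.mul_mem (hA i x) (hB x j)

end IsHomogMatrix

/-! ### Determinantal sums -/

section DetSum

variable {Γ : Type u} [Group Γ] {R : Type v} [Ring R] {m n k l : Type*}

/-- `C` is the determinantal sum of `A` and `B` with respect to the column `c`. Row sums are
treated as column sums of the transposed matrices. -/
structure IsColSum (c : n) (A B C : Matrix m n R) : Prop where
  eq_of_ne : ∀ i j, j ≠ c → A i j = B i j
  apply_of_ne : ∀ i j, j ≠ c → C i j = A i j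
  apply_self : ∀ i, C i c = A i c + B i c

theorem isDetSum_iff {q : ℕ} {A B C : Matrix (Fin q) (Fin q) R} :
    IsDetSum A B C ↔ (∃ c, IsColSum c A B C) ∨ ∃ r, IsColSum r Aᵀ Bᵀ Cᵀ := by
  refine or_congr (exists_congr fun c => ⟨?_, ?_⟩) (exists_congr fun r => ⟨?_, ?_⟩)
  · exact fun ⟨h, h'⟩ => ⟨h, fun i j hj => by simp [h', hj], fun i => by simp [h']⟩
  · refine fun h => ⟨h.eq_of_ne, fun i j => ?_⟩
    split_ifs with hj
    exacts [hj ▸ h.apply_self i, h.apply_of_ne i j hj]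
  · exact fun ⟨h, h'⟩ => ⟨fun j i => h i j, fun j i hi => by simp [h', hi], fun j => by simp [h']⟩
  · refine fun h => ⟨fun i j => h.eq_of_ne j i, fun i j => ?_⟩
    split_ifs with hi
    exacts [hi ▸ h.apply_self j, h.apply_of_ne j i hi]

namespace IsColSum

variable {c : n} {A B C : Matrix m n R}

theorem symm (h : IsColSum c A B C) : IsColSum c B A C where
  eq_of_ne i j hj := (h.eq_of_ne i j hj).symm
  apply_of_ne i j hj := (h.apply_of_ne i j hj).trans (h.eq_of_ne i j hj)
  apply_self i := (h.apply_self i).trans (add_comm _ _)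

theorem apply_eq_or (h : IsColSum c A B C) (i : m) (j : n) :
    C i j = A i j ∨ C i j = A i j + B i j := by
  obtain rfl | hj := eq_or_ne j c
  exacts [.inr (h.apply_self i), .inl (h.apply_of_ne i j hj)]

theorem submatrix (h : IsColSum c A B C) (e : k → m) (f : l ≃ n) :
    IsColSum (f.symm c) (A.submatrix e f) (B.submatrix e f) (C.submatrix e f) where
  eq_of_ne i j hj := h.eq_of_ne _ _ (mt (f.eq_symm_apply).2 hj)
  apply_of_ne i j hj := h.apply_of_ne _ _ (mt (f.eq_symm_apply).2 hj)
  apply_self i := by simpa using h.apply_self (e i)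

theorem fromBlocks_zero (h : IsColSum c A B C) (D : Matrix k l R) :
    IsColSum (Sum.inl c) (fromBlocks A 0 0 D) (fromBlocks B 0 0 D) (fromBlocks C 0 0 D) where
  eq_of_ne := by
    rintro (i | i) (j | j) hj
    exacts [h.eq_of_ne i j (hj <| congrArg _ ·), rfl, rfl, rfl]
  apply_of_ne := by
    rintro (i | i) (j | j) hj
    exacts [h.apply_of_ne i j (hj <| congrArg _ ·), rfl, rfl, rfl]
  apply_self := by
    rintro (i | _)
    exacts [h.apply_self i, (add_zero 0).symm]

theorem map {S F : Type*} [Ring S] [FunLike F R S] [AddMonoidHomClass F R S]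
    (h : IsColSum c A B C) (f : F) : IsColSum c (A.map f) (B.map f) (C.map f) where
  eq_of_ne i j hj := congrArg f (h.eq_of_ne i j hj)
  apply_of_ne i j hj := congrArg f (h.apply_of_ne i j hj)
  apply_self i := (congrArg f (h.apply_self i)).trans (map_add f _ _)

end IsColSum

variable {𝒜 : Γ → AddSubgroup R} {p q : ℕ} {A B C : Matrix (Fin p) (Fin p) R}

theorem GrDetSum.isHomogSq (h : GrDetSum 𝒜 A B C) : IsHomogSq 𝒜 C := by
  obtain ⟨⟨α, β, hA, hB⟩, hC⟩ := h
  refine ⟨α, β, fun i j => ?_⟩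
  obtain hij | hij : C i j = A i j ∨ C i j = A i j + B i j := by
    obtain ⟨c, h⟩ | ⟨r, h⟩ := isDetSum_iff.1 hC
    exacts [h.apply_eq_or i j, h.apply_eq_or j i]
  exacts [hij ▸ hA i j, hij ▸ add_mem (hA i j) (hB i j)]

theorem IsHomogMatrix.diagSum {p' q' : ℕ} {A : Matrix (Fin p) (Fin p') R}
    {B : Matrix (Fin q) (Fin q') R} {α : Fin p → Γ} {β : Fin p' → Γ} {α' : Fin q → Γ}
    {β' : Fin q' → Γ} (hA : IsHomogMatrix 𝒜 A α β) (hB : IsHomogMatrix 𝒜 B α' β') :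
    IsHomogMatrix 𝒜 (diagSum A B) (Sum.elim α α' ∘ finSumFinEquiv.symm)
      (Sum.elim β β' ∘ finSumFinEquiv.symm) :=
  (hA.fromBlocks .zero .zero hB).submatrix _ _

theorem IsHomogSq.diagSum {D : Matrix (Fin q) (Fin q) R} (hA : IsHomogSq 𝒜 A)
    (hD : IsHomogSq 𝒜 D) : IsHomogSq 𝒜 (diagSum A D) := by
  obtain ⟨α, β, hA⟩ := hA
  obtain ⟨α', β', hD⟩ := hD
  exact ⟨_, _, IsHomogMatrix.diagSum hA hD⟩

theorem GrDetSum.diagSum (h : GrDetSum 𝒜 A B C) {D : Matrix (Fin q) (Fin q) R}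
    (hD : IsHomogSq 𝒜 D) : GrDetSum 𝒜 (diagSum A D) (diagSum B D) (diagSum C D) := by
  obtain ⟨⟨α, β, hA, hB⟩, hC⟩ := h
  obtain ⟨α', β', hD⟩ := hD
  refine ⟨⟨_, _, IsHomogMatrix.diagSum hA hD, IsHomogMatrix.diagSum hB hD⟩, isDetSum_iff.2 ?_⟩
  obtain ⟨c, h⟩ | ⟨r, h⟩ := isDetSum_iff.1 hC
  · exact .inl ⟨_, (h.fromBlocks_zero D).submatrix finSumFinEquiv.symm finSumFinEquiv.symm⟩
  · have hsum := (h.fromBlocks_zero Dᵀ).submatrix finSumFinEquiv.symm finSumFinEquiv.symm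
    refine .inr ⟨finSumFinEquiv (Sum.inl r), ?_⟩
    simpa only [_root_.diagSum, reindex_apply, transpose_submatrix, fromBlocks_transpose,
      transpose_zero, Equiv.symm_symm] using hsum

theorem GrDetSum.submatrix (h : GrDetSum 𝒜 A B C) (e f : Fin q ≃ Fin p) :
    GrDetSum 𝒜 (A.submatrix e f) (B.submatrix e f) (C.submatrix e f) := by
  obtain ⟨⟨α, β, hA, hB⟩, hC⟩ := h
  refine ⟨⟨α ∘ e, β ∘ f, fun i j => hA (e i) (f j), fun i j => hB (e i) (f j)⟩,
    isDetSum_iff.2 ?_⟩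
  obtain ⟨c, h⟩ | ⟨r, h⟩ := isDetSum_iff.1 hC
  exacts [.inl ⟨_, h.submatrix e f⟩, .inr ⟨_, h.submatrix f e⟩]

end DetSum

/-! ### Matrices over graded division rings -/

section GradedDivision

variable {Γ : Type u} [Group Γ] {K : Type w} [Ring K]

/-- A grading all of whose nonzero homogeneous elements have a homogeneous inverse. -/
class IsGradedDivision (𝒦 : Γ → AddSubgroup K) : Prop extends IsMulGrading 𝒦 where
  exists_inv : ∀ {γ : Γ} {x : K}, x ∈ 𝒦 γ → x ≠ 0 → ∃ y ∈ 𝒦 γ⁻¹, x * y = 1 ∧ y * x = 1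

theorem exists_mem_inv_of_isUnit [DecidableEq Γ] {𝒦 : Γ → AddSubgroup K} [IsMulGrading 𝒦]
    (h𝒦 : DirectSum.IsInternal 𝒦) {γ : Γ} {x : K} (hx : x ∈ 𝒦 γ) (hu : IsUnit x) :
    ∃ y ∈ 𝒦 γ⁻¹, x * y = 1 ∧ y * x = 1 := by
  obtain ⟨y, hxy, hyx⟩ := isUnit_iff_exists.1 hu
  let 𝒦' : Additive Γ → AddSubgroup K := fun a => 𝒦 a.toMul
  have one_mem' : (1 : K) ∈ 𝒦' 0 := IsMulGrading.one_mem (𝒜 := 𝒦)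
  let _ : GradedRing 𝒦' :=
    { DirectSum.IsInternal.chooseDecomposition (M := K) (ℳ := 𝒦') h𝒦 with
      one_mem := one_mem'
      mul_mem := fun _ _ _ _ => IsMulGrading.mul_mem (𝒜 := 𝒦) }
  let z := DirectSum.decompose 𝒦' y (Additive.ofMul γ⁻¹)
  have hxz : x * z = 1 := by
    rw [← DirectSum.coe_decompose_mul_add_of_left_mem 𝒦' (i := Additive.ofMul γ) hx, hxy,
      ← ofMul_mul, mul_inv_cancel, ofMul_one, DirectSum.decompose_of_mem_same 𝒦' one_mem']
  have hzy : (z : K) = y := (left_inv_eq_right_inv hyx hxz).symm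
  exact ⟨z, z.2, hxz, hzy ▸ hyx⟩

theorem GrDivRingHom.isGradedDivision [DecidableEq Γ] {R : Type v} [Ring R]
    {𝒜 : Γ → AddSubgroup R} (G : GrDivRingHom Γ R 𝒜) : IsGradedDivision G.grading :=
  have : IsMulGrading G.grading := ⟨G.one_mem, G.mul_mem⟩
  { exists_inv := fun hx h0 => exists_mem_inv_of_isUnit G.internal hx (G.isUnit_of_ne hx h0) }

/-- The grading of the opposite ring in which `op x` has degree `γ⁻¹` when `x` has degree `γ`. -/
def opGrading (𝒦 : Γ → AddSubgroup K) (γ : Γ) : AddSubgroup Kᵐᵒᵖ :=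
  (𝒦 γ⁻¹).comap MulOpposite.opAddEquiv.symm.toAddMonoidHom

instance {𝒦 : Γ → AddSubgroup K} [IsGradedDivision 𝒦] : IsGradedDivision (opGrading 𝒦) where
  one_mem := by
    change (1 : K) ∈ 𝒦 1⁻¹
    rw [inv_one]
    exact IsMulGrading.one_mem
  mul_mem {γ δ x y} hx hy := by
    change y.unop * x.unop ∈ 𝒦 (γ * δ)⁻¹
    rw [_root_.mul_inv_rev]
    exact IsMulGrading.mul_mem hy hx
  exists_inv {γ x} hx hx0 := by
    obtain ⟨y, hy, hxy, hyx⟩ :=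
      IsGradedDivision.exists_inv (𝒦 := 𝒦) hx ((MulOpposite.unop_ne_zero_iff x).2 hx0)
    exact ⟨MulOpposite.op y, hy, MulOpposite.unop_injective hyx, MulOpposite.unop_injective hxy⟩

theorem IsHomogMatrix.transpose_map_op {𝒦 : Γ → AddSubgroup K} {m n : Type*}
    {A : Matrix m n K} {α : m → Γ} {β : n → Γ} (hA : IsHomogMatrix 𝒦 A α β) :
    IsHomogMatrix (opGrading 𝒦) (Aᵀ.map MulOpposite.op) β α := by
  intro j i
  change A i j ∈ 𝒦 (β j * (α i)⁻¹)⁻¹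
  rw [_root_.mul_inv_rev, inv_inv]
  exact hA i j

theorem IsHomogMatrix.exists_normalized {𝒦 : Γ → AddSubgroup K} [IsGradedDivision 𝒦]
    {n : Type*} {v : Matrix n Unit K} {β : n → Γ} {γ : Γ}
    (hv : IsHomogMatrix 𝒦 v β fun _ => γ) {c : n} (hc : v c () ≠ 0) :
    ∃ s : Matrix Unit Unit K, IsHomogMatrix 𝒦 (v * s) β (fun _ => β c) ∧ (v * s) c () = 1 := by
  obtain ⟨y, hy, hvy, -⟩ := IsGradedDivision.exists_inv (hv c ()) hc
  refine ⟨of fun _ _ => y, hv.mul (β := fun _ => γ) fun _ _ => ?_, ?_⟩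
  · rwa [_root_.mul_inv_rev, inv_inv] at hy
  · simpa [Matrix.mul_apply] using hvy

/-- The Schur complement of the entry `Q i c`, given an inverse `y` of this entry. -/
def pivotComplement {m n : Type*} (Q : Matrix m n K) (i : m) (c : n) (y : K) :
    Matrix {i' // i' ≠ i} {j // j ≠ c} K :=
  of fun i' j => Q i' j - Q i' c * y * Q i j

theorem IsHomogMatrix.pivotComplement {𝒦 : Γ → AddSubgroup K} [IsMulGrading 𝒦]
    {m n : Type*} {Q : Matrix m n K} {α : m → Γ}
    {β : n → Γ} (hQ : IsHomogMatrix 𝒦 Q α β) {i : m} {c : n} {y : K}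
    (hy : y ∈ 𝒦 (α i * (β c)⁻¹)⁻¹) :
    IsHomogMatrix 𝒦 (pivotComplement Q i c y) (fun i' => α i') fun j => β j := by
  refine fun i' j => sub_mem (hQ i' j) ?_
  have key : α i' * (β j)⁻¹ = α i' * (β c)⁻¹ * (α i * (β c)⁻¹)⁻¹ * (α i * (β j)⁻¹) := by group
  rw [key]
  exact IsMulGrading.mul_mem (IsMulGrading.mul_mem (hQ i' c) hy) (hQ i j)

theorem fromBlocks_mul_fromRows_eq_zero {m n o o' k : Type*} [Fintype n] [Fintype o]
    [Fintype o'] [DecidableEq o] {p : Matrix o o' K} {y : Matrix o' o K} (hpy : p * y = 1)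
    {u : Matrix o n K} {w : Matrix m o' K} {D : Matrix m n K} {v : Matrix n k K}
    (hv : (D - w * y * u) * v = 0) :
    fromBlocks p u w D * fromRows (-(y * u * v)) v = 0 := by
  have top : p * -(y * u * v) + u * v = 0 := by
    rw [Matrix.mul_neg, ← Matrix.mul_assoc, ← Matrix.mul_assoc, hpy, Matrix.one_mul,
      neg_add_cancel]
  have bottom : w * -(y * u * v) + D * v = 0 := by
    rw [← hv, Matrix.sub_mul, Matrix.mul_neg, Matrix.mul_assoc, Matrix.mul_assoc, Matrix.mul_assoc,
      neg_add_eq_sub]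
  rw [fromBlocks_mul_fromRows, top, bottom, fromRows_zero]

/-- `Q` annihilates a nonzero homogeneous column vector. Column vectors are encoded as
`n × Unit` matrices, so that their homogeneity is an instance of `IsHomogMatrix`. -/
def HasHomogKernel (𝒦 : Γ → AddSubgroup K) {m n : Type*} [Fintype n] (Q : Matrix m n K)
    (β : n → Γ) : Prop :=
  ∃ (γ : Γ) (v : Matrix n Unit K), IsHomogMatrix 𝒦 v β (fun _ => γ) ∧ v ≠ 0 ∧ Q * v = 0

theorem HasHomogKernel.not_isUnit {𝒦 : Γ → AddSubgroup K} {n : Type*} [Fintype n] [DecidableEq n]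
    {A : Matrix n n K} {β : n → Γ} (h : HasHomogKernel 𝒦 A β) : ¬ IsUnit A := by
  intro hA
  obtain ⟨B, -, hBA⟩ := isUnit_iff_exists.1 hA
  obtain ⟨γ, v, -, hv0, hAv⟩ := h
  apply hv0
  rw [← Matrix.one_mul v, ← hBA, Matrix.mul_assoc, hAv, Matrix.mul_zero]

theorem HasHomogKernel.mul_left {𝒦 : Γ → AddSubgroup K} {l m n : Type*} [Fintype m] [Fintype n]
    {Q : Matrix m n K} {β : n → Γ} (h : HasHomogKernel 𝒦 Q β) (P : Matrix l m K) :
    HasHomogKernel 𝒦 (P * Q) β := by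
  obtain ⟨γ, v, hv, hv0, hQv⟩ := h
  exact ⟨γ, v, hv, hv0, by rw [Matrix.mul_assoc, hQv, Matrix.mul_zero]⟩

theorem HasHomogKernel.of_submatrix {𝒦 : Γ → AddSubgroup K} {m n m' n' : Type*} [Fintype n]
    [Fintype n'] {Q : Matrix m n K} {β : n → Γ} (e : m' ≃ m) (f : n' ≃ n)
    (h : HasHomogKernel 𝒦 (Q.submatrix e f) (β ∘ f)) : HasHomogKernel 𝒦 Q β := by
  obtain ⟨γ, v, hv, hv0, hQv⟩ := h
  obtain ⟨v, rfl⟩ : ∃ w : Matrix n Unit K, v = w.submatrix f id :=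
    ⟨v.submatrix f.symm id, by simp⟩
  refine ⟨γ, v, f.surjective.forall.2 hv, ?_, ?_⟩
  · rintro rfl
    exact hv0 (by simp)
  · rw [submatrix_mul_equiv] at hQv
    ext i j
    simpa using congrFun₂ hQv (e.symm i) j

variable {𝒦 : Γ → AddSubgroup K} {m n : Type*} [Fintype n]

theorem hasHomogKernel_zero [IsMulGrading 𝒦] [Nontrivial K] [Nonempty n] (β : n → Γ) :
    HasHomogKernel 𝒦 (0 : Matrix m n K) β := by
  classical
  obtain ⟨c⟩ := ‹Nonempty n›
  refine ⟨β c, (1 : Matrix n n K).submatrix id fun _ => c, IsHomogMatrix.one.submatrix _ _, ?_,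
    Matrix.zero_mul _⟩
  exact fun h => one_ne_zero (α := K) ((one_apply_eq c).symm.trans (congrFun₂ h c ()))

theorem HasHomogKernel.of_schur_complement [IsMulGrading 𝒦] {o o' : Type*} [Fintype o]
    [Fintype o'] [DecidableEq o] {p : Matrix o o' K} {y : Matrix o' o K} (hpy : p * y = 1)
    {u : Matrix o n K} {w : Matrix m o' K} {D : Matrix m n K} {α : o → Γ} {β : n → Γ} {β' : o' → Γ}
    (hy : IsHomogMatrix 𝒦 y β' α) (hu : IsHomogMatrix 𝒦 u α β)
    (h : HasHomogKernel 𝒦 (D - w * y * u) β) :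
    HasHomogKernel 𝒦 (fromBlocks p u w D) (Sum.elim β' β) := by
  obtain ⟨γ, v, hv, hv0, hDv⟩ := h
  refine ⟨γ, fromRows (-(y * u * v)) v, ((hy.mul hu).mul hv).neg.fromRows hv, ?_,
    fromBlocks_mul_fromRows_eq_zero hpy hDv⟩
  exact fun h0 => hv0 (Matrix.ext fun i j => congrFun₂ h0 (Sum.inr i) j)

theorem HasHomogKernel.of_pivot [IsMulGrading 𝒦] [DecidableEq n] {Q : Matrix m n K}
    {α : m → Γ} {β : n → Γ} (hQ : IsHomogMatrix 𝒦 Q α β) {i : m} {c : n} {y : K}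
    (hy : y ∈ 𝒦 (α i * (β c)⁻¹)⁻¹) (hcy : Q i c * y = 1)
    (h : HasHomogKernel 𝒦 (pivotComplement Q i c y) fun j => β j) :
    HasHomogKernel 𝒦 Q β := by
  classical
  let e := Equiv.sumCompl (· = i)
  let f := Equiv.sumCompl (· = c)
  let p := Q.submatrix (e ∘ Sum.inl) (f ∘ Sum.inl)
  let u := Q.submatrix (e ∘ Sum.inl) (f ∘ Sum.inr)
  let w := Q.submatrix (e ∘ Sum.inr) (f ∘ Sum.inl)
  let D := Q.submatrix (e ∘ Sum.inr) (f ∘ Sum.inr)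
  let y' : Matrix {j // j = c} {j // j = i} K := of fun _ _ => y
  have hy' : IsHomogMatrix 𝒦 y' (β ∘ f ∘ Sum.inl) (α ∘ e ∘ Sum.inl) := by
    rintro ⟨_, rfl⟩ ⟨_, rfl⟩
    rwa [_root_.mul_inv_rev, inv_inv] at hy
  have hpy : p * y' = 1 := by
    ext ⟨_, rfl⟩ ⟨_, rfl⟩
    rw [Matrix.mul_apply, Fintype.sum_unique, one_apply_eq]
    exact hcy
  have hD : D - w * y' * u = pivotComplement Q i c y := by
    ext i' j
    simp only [Matrix.sub_apply, Matrix.mul_apply, Fintype.sum_unique]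
    rfl
  have hβ : β ∘ f = Sum.elim (β ∘ f ∘ Sum.inl) (β ∘ f ∘ Sum.inr) := (Sum.elim_comp_inl_inr _).symm
  refine .of_submatrix e f ?_
  rw [hβ, ← fromBlocks_toBlocks (Q.submatrix e f)]
  rw [← hD] at h
  exact h.of_schur_complement hpy hy' (hQ.submatrix _ _)

theorem hasHomogKernel_of_card_lt [Fintype m] [IsGradedDivision 𝒦] [Nontrivial K] {Q : Matrix m n K}
    {α : m → Γ} {β : n → Γ} (hQ : IsHomogMatrix 𝒦 Q α β)
    (hcard : Fintype.card m < Fintype.card n) : HasHomogKernel 𝒦 Q β := by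
  classical
  induction hN : Fintype.card m using Nat.strong_induction_on generalizing m n with | _ N ih
  have : Nonempty n := Fintype.card_pos_iff.1 (by omega)
  obtain rfl | h0 := eq_or_ne Q 0
  · exact hasHomogKernel_zero β
  obtain ⟨i, c, hic⟩ : ∃ i c, Q i c ≠ 0 := by
    contrapose! h0
    exact Matrix.ext h0
  obtain ⟨y, hy, hcy, -⟩ := IsGradedDivision.exists_inv (hQ i c) hic
  have hm : 0 < Fintype.card m := Fintype.card_pos_iff.2 ⟨i⟩
  have hcard_i : Fintype.card {j // j ≠ i} = Fintype.card m - 1 := Set.card_ne_eq i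
  have hcard_c : Fintype.card {j // j ≠ c} = Fintype.card n - 1 := Set.card_ne_eq c
  exact .of_pivot hQ hy hcy (ih (Fintype.card {j // j ≠ i}) (by omega) (hQ.pivotComplement hy)
    (by omega) rfl)

theorem IsHomogMatrix.exists_mul_eq [Fintype m] [IsGradedDivision 𝒦] [Nontrivial K]
    {A : Matrix m n K} {α : m → Γ} {β : n → Γ} (hA : IsHomogMatrix 𝒦 A α β)
    (hcard : Fintype.card m ≤ Fintype.card n) (hker : ¬ HasHomogKernel 𝒦 A β) {γ : Γ}
    {w : Matrix m Unit K} (hw : IsHomogMatrix 𝒦 w α fun _ => γ) :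
    ∃ x : Matrix n Unit K, IsHomogMatrix 𝒦 x β (fun _ => γ) ∧ A * x = w := by
  obtain ⟨δ, v, hv, hv0, hAv⟩ : HasHomogKernel 𝒦 (Matrix.fromCols A w) (Sum.elim β fun _ => γ) :=
    hasHomogKernel_of_card_lt (hA.fromCols hw) (by simpa using hcard)
  obtain ⟨v, s, rfl⟩ : ∃ v₁ v₂, v = Matrix.fromRows v₁ v₂ := ⟨_, _, (fromRows_toRows v).symm⟩
  have hv' : IsHomogMatrix 𝒦 v β fun _ => δ := hv.submatrix Sum.inl id
  have hs : IsHomogMatrix 𝒦 s (fun _ => γ) fun _ => δ := hv.submatrix Sum.inr id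
  rw [fromCols_mul_fromRows] at hAv
  have hs0 : s () () ≠ 0 := by
    intro h
    obtain rfl : s = 0 := Matrix.ext fun _ _ => h
    refine hker ⟨δ, v, hv', fun h0 => hv0 (by rw [h0, fromRows_zero]), ?_⟩
    rwa [Matrix.mul_zero, add_zero] at hAv
  obtain ⟨y, hy, hsy, -⟩ := IsGradedDivision.exists_inv (hs () ()) hs0
  have hsy' : s * of (fun _ _ => y) = (1 : Matrix Unit Unit K) := by
    ext
    simpa [Matrix.mul_apply] using hsy
  have hy' : IsHomogMatrix 𝒦 (of fun _ _ => y : Matrix Unit Unit K) (fun _ => δ) fun _ => γ :=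
    fun _ _ => by rwa [_root_.mul_inv_rev, inv_inv] at hy
  refine ⟨-(v * of fun _ _ => y), (hv'.mul hy').neg, ?_⟩
  rw [Matrix.mul_neg, ← Matrix.mul_assoc, eq_neg_of_add_eq_zero_left hAv, Matrix.neg_mul, neg_neg,
    Matrix.mul_assoc, hsy', Matrix.mul_one]

theorem IsHomogMatrix.exists_mul_eq_one [Fintype m] [DecidableEq m] [IsGradedDivision 𝒦]
    [Nontrivial K] {A : Matrix m n K} {α : m → Γ} {β : n → Γ} (hA : IsHomogMatrix 𝒦 A α β)
    (hcard : Fintype.card m ≤ Fintype.card n) (hker : ¬ HasHomogKernel 𝒦 A β) :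
    ∃ B : Matrix n m K, IsHomogMatrix 𝒦 B β α ∧ A * B = 1 := by
  have hcol (i : m) := hA.exists_mul_eq hcard hker
    (w := (1 : Matrix m m K).submatrix id fun _ => i) (IsHomogMatrix.one.submatrix _ _)
  choose x hx hAx using hcol
  exact ⟨of fun j i => x i j (), fun j i => hx i j (), Matrix.ext fun i j => congrFun₂ (hAx j) i ()⟩

theorem IsHomogMatrix.isUnit_iff_not_hasHomogKernel [DecidableEq n] [IsGradedDivision 𝒦]
    [Nontrivial K] {A : Matrix n n K} {α β : n → Γ} (hA : IsHomogMatrix 𝒦 A α β) :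
    IsUnit A ↔ ¬ HasHomogKernel 𝒦 A β := by
  refine ⟨fun h hker => hker.not_isUnit h, fun hker => ?_⟩
  obtain ⟨B, hB, hAB⟩ := hA.exists_mul_eq_one le_rfl hker
  have hkerB : ¬ HasHomogKernel 𝒦 B α :=
    fun h => (h.mul_left A).not_isUnit (hAB ▸ isUnit_one)
  obtain ⟨C, -, hBC⟩ := hB.exists_mul_eq_one le_rfl hkerB
  exact isUnit_iff_exists.2 ⟨B, hAB, left_inv_eq_right_inv hAB hBC ▸ hBC⟩

theorem IsColSum.mul_eq_of_apply_eq_zero {A B C : Matrix m n K} {c : n} (h : IsColSum c A B C)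
    {v : Matrix n Unit K} (hc : v c () = 0) : C * v = A * v := by
  ext i _
  rw [Matrix.mul_apply, Matrix.mul_apply]
  refine Finset.sum_congr rfl fun j _ => ?_
  obtain rfl | hj := eq_or_ne j c
  · rw [hc, mul_zero, mul_zero]
  · rw [h.apply_of_ne i j hj]

theorem IsColSum.hasHomogKernel [IsGradedDivision 𝒦] [Nontrivial K] {A B C : Matrix m n K} {c : n}
    (h : IsColSum c A B C) {β : n → Γ} (hA : HasHomogKernel 𝒦 A β) (hB : HasHomogKernel 𝒦 B β) :
    HasHomogKernel 𝒦 C β := by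
  classical
  obtain ⟨γ, v, hv, hv0, hAv⟩ := hA
  obtain ⟨δ, w, hw, hw0, hBw⟩ := hB
  by_cases hvc : v c () = 0
  · exact ⟨γ, v, hv, hv0, h.mul_eq_of_apply_eq_zero hvc ▸ hAv⟩
  by_cases hwc : w c () = 0
  · exact ⟨δ, w, hw, hw0, h.symm.mul_eq_of_apply_eq_zero hwc ▸ hBw⟩
  obtain ⟨s, hvs, hvs1⟩ := hv.exists_normalized hvc
  obtain ⟨t, hwt, hwt1⟩ := hw.exists_normalized hwc
  let x : Matrix n Unit K := v * s + w * t - (1 : Matrix n n K).submatrix id fun _ => c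
  have hx : IsHomogMatrix 𝒦 x β fun _ => β c := (hvs.add hwt).sub (IsHomogMatrix.one.submatrix _ _)
  have hxc : x c () = 1 := by
    change (v * s) c () + (w * t) c () - (1 : Matrix n n K) c c = 1
    rw [hvs1, hwt1, one_apply_eq, add_sub_cancel_right]
  have hCx : C * x = A * (v * s) + B * (w * t) := by
    ext i _
    simp only [Matrix.mul_apply (M := C), Matrix.mul_apply (M := A), Matrix.mul_apply (M := B),
      Matrix.add_apply, ← Finset.sum_add_distrib]
    refine Finset.sum_congr rfl fun j _ => ?_
    obtain rfl | hj := eq_or_ne j c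
    · rw [hxc, hvs1, hwt1, h.apply_self, mul_one, mul_one, mul_one]
    · simp [x, hj, h.apply_of_ne, mul_add, h.eq_of_ne]
  refine ⟨β c, x, hx, fun h0 => one_ne_zero (α := K) ?_, ?_⟩
  · rw [← hxc, h0, Matrix.zero_apply]
  · rw [hCx, ← Matrix.mul_assoc, ← Matrix.mul_assoc, hAv, hBw, Matrix.zero_mul, Matrix.zero_mul,
      add_zero]

theorem isUnit_transpose_map_op [DecidableEq n] {A : Matrix n n K} :
    IsUnit (Aᵀ.map MulOpposite.op) ↔ IsUnit A :=
  (MulEquiv.isUnit_map (RingEquiv.mopMatrix (α := K)).symm (x := MulOpposite.op A)).trans isUnit_op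

theorem IsColSum.not_isUnit [DecidableEq n] [IsGradedDivision 𝒦] [Nontrivial K]
    {A B C : Matrix n n K} {c : n} (h : IsColSum c A B C) {α β : n → Γ}
    (hA : IsHomogMatrix 𝒦 A α β) (hB : IsHomogMatrix 𝒦 B α β) (hAu : ¬ IsUnit A)
    (hBu : ¬ IsUnit B) : ¬ IsUnit C := by
  rw [hA.isUnit_iff_not_hasHomogKernel, not_not] at hAu
  rw [hB.isUnit_iff_not_hasHomogKernel, not_not] at hBu
  exact (h.hasHomogKernel hAu hBu).not_isUnit

theorem GrDetSum.not_isUnit [IsGradedDivision 𝒦] [Nontrivial K] {p : ℕ}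
    {A B C : Matrix (Fin p) (Fin p) K} (h : GrDetSum 𝒦 A B C) (hA : ¬ IsUnit A)
    (hB : ¬ IsUnit B) : ¬ IsUnit C := by
  obtain ⟨⟨α, β, hAh, hBh⟩, hC⟩ := h
  obtain ⟨c, h⟩ | ⟨r, h⟩ := isDetSum_iff.1 hC
  · exact h.not_isUnit hAh hBh hA hB
  · rw [← isUnit_transpose_map_op] at hA hB ⊢
    exact (h.map MulOpposite.opAddEquiv).not_isUnit (IsHomogMatrix.transpose_map_op hAh)
      (IsHomogMatrix.transpose_map_op hBh) hA hB

end GradedDivision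

section Necessity

variable {Γ : Type u} [Group Γ] {R : Type v} [Ring R] {𝒜 : Γ → AddSubgroup R}
  {K : Type w} [Ring K] {𝒦 : Γ → AddSubgroup K} {f : R →+* K}

theorem IsHomogMatrix.map (hf : ∀ γ, ∀ r ∈ 𝒜 γ, f r ∈ 𝒦 γ) {m n : Type*}
    {A : Matrix m n R} {α : m → Γ} {β : n → Γ} (hA : IsHomogMatrix 𝒜 A α β) :
    IsHomogMatrix 𝒦 (A.map f) α β :=
  fun i j => hf _ _ (hA i j)

theorem GrDetSum.map (hf : ∀ γ, ∀ r ∈ 𝒜 γ, f r ∈ 𝒦 γ) {p : ℕ}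
    {A B C : Matrix (Fin p) (Fin p) R} (h : GrDetSum 𝒜 A B C) :
    GrDetSum 𝒦 (A.map f) (B.map f) (C.map f) := by
  obtain ⟨⟨α, β, hA, hB⟩, hC⟩ := h
  refine ⟨⟨α, β, IsHomogMatrix.map hf hA, IsHomogMatrix.map hf hB⟩, isDetSum_iff.2 ?_⟩
  obtain ⟨c, h⟩ | ⟨r, h⟩ := isDetSum_iff.1 hC
  exacts [.inl ⟨c, h.map f⟩, .inr ⟨r, h.map f⟩]

theorem not_isUnit_map_of_not_isGrFull [IsGradedDivision 𝒦] [Nontrivial K]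
    (hf : ∀ γ, ∀ r ∈ 𝒜 γ, f r ∈ 𝒦 γ) {p : ℕ} {A : Matrix (Fin p) (Fin p) R}
    (hA : ¬ IsGrFull 𝒜 A) : ¬ IsUnit (A.map f) := by
  unfold IsGrFull at hA
  push Not at hA
  obtain ⟨r, P, Q, α, lam, β, -, hQ, rfl, hr⟩ := hA
  have hker : HasHomogKernel 𝒦 (Q.map f) β :=
    hasHomogKernel_of_card_lt (IsHomogMatrix.map hf hQ) (by simpa using hr)
  rw [Matrix.map_mul]
  exact (hker.mul_left (P.map f)).not_isUnit

theorem IsDetSumOf.not_isUnit_map [IsGradedDivision 𝒦] [Nontrivial K]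
    (hf : ∀ γ, ∀ r ∈ 𝒜 γ, f r ∈ 𝒦 γ) {W : Set (SqMat R)}
    (hW : ∀ p ∈ W, ¬ IsGrFull 𝒜 p.2) {p : SqMat R} (hp : IsDetSumOf 𝒜 W p) :
    ¬ IsUnit (p.2.map f) := by
  induction hp with
  | base p hp => exact not_isUnit_map_of_not_isGrFull hf (hW p hp)
  | step A B C _ _ h ihA ihB => exact (h.map hf).not_isUnit ihA ihB

end Necessity

/-! ### gr-matrix preideals -/

/-- `MatMem I A`: numbering the rows and the columns of `A` in some way turns it into a member
of `I`. This extends membership in a permutation invariant set of matrices indexed by `Fin n` to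
matrices indexed by arbitrary finite types. -/
def MatMem {R : Type v} (I : Set (SqMat R)) {ι : Type*} (A : Matrix ι ι R) : Prop :=
  ∃ (k : ℕ) (e f : ι ≃ Fin k), (⟨k, A.submatrix e.symm f.symm⟩ : SqMat R) ∈ I

theorem MatMem.finite {R : Type v} {I : Set (SqMat R)} {ι : Type*} {A : Matrix ι ι R}
    (h : MatMem I A) : Finite ι :=
  have ⟨_, e, _⟩ := h
  .of_equiv _ e.symm

theorem matMem_submatrix {R : Type v} {I : Set (SqMat R)} {ι κ : Type*} {A : Matrix ι ι R}
    (e f : κ ≃ ι) : MatMem I (A.submatrix e f) ↔ MatMem I A := by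
  constructor
  · rintro ⟨k, e', f', h⟩
    exact ⟨k, e.symm.trans e', f.symm.trans f', h⟩
  · rintro ⟨k, e', f', h⟩
    exact ⟨k, e.trans e', f.trans f', by simpa [Function.comp_def] using h⟩

theorem matMem_fromBlocks_diagonal_comm {R : Type v} [Ring R] {I : Set (SqMat R)} {ι κ : Type*}
    {A : Matrix ι ι R} {D : Matrix κ κ R} :
    MatMem I (fromBlocks A 0 0 D) ↔ MatMem I (fromBlocks D 0 0 A) := by
  rw [← matMem_submatrix (Equiv.sumComm _ _) (Equiv.sumComm _ _)]
  exact iff_of_eq (congrArg _ (fromBlocks_submatrix_sum_swap_sum_swap _ _ _ _))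

section Preideal

variable {Γ : Type u} [Group Γ] {R : Type v} [Ring R]

/-- gr-matrix preideal: a set of square homogeneous matrices satisfying (I1)–(I4), that is, a
gr-matrix ideal which need not satisfy the cancellation axiom (I5). -/
structure IsGrMatrixPreideal (𝒜 : Γ → AddSubgroup R) (I : Set (SqMat R)) : Prop where
  subset_homog : ∀ p ∈ I, IsHomogSq 𝒜 p.2
  i1 : ∀ {n : ℕ} (A : Matrix (Fin n) (Fin n) R),
    IsHomogSq 𝒜 A → ¬ IsGrFull 𝒜 A → (⟨n, A⟩ : SqMat R) ∈ I
  i2 : ∀ {n : ℕ} (A B C : Matrix (Fin n) (Fin n) R),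
    (⟨n, A⟩ : SqMat R) ∈ I → (⟨n, B⟩ : SqMat R) ∈ I → GrDetSum 𝒜 A B C →
    (⟨n, C⟩ : SqMat R) ∈ I
  i3 : ∀ {m n : ℕ} (A : Matrix (Fin m) (Fin m) R) (B : Matrix (Fin n) (Fin n) R),
    (⟨m, A⟩ : SqMat R) ∈ I → IsHomogSq 𝒜 B → (⟨m + n, diagSum A B⟩ : SqMat R) ∈ I
  i4 : ∀ {n : ℕ} (A : Matrix (Fin n) (Fin n) R) (e f : Equiv.Perm (Fin n)),
    (⟨n, A⟩ : SqMat R) ∈ I → (⟨n, A.submatrix ⇑e ⇑f⟩ : SqMat R) ∈ I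

variable {𝒜 : Γ → AddSubgroup R} {I : Set (SqMat R)}

theorem IsGrPrimeMatrixIdeal.isGrMatrixPreideal (hI : IsGrPrimeMatrixIdeal 𝒜 I) :
    IsGrMatrixPreideal 𝒜 I where
  subset_homog := hI.subset_homog
  i1 := hI.pm1
  i2 := hI.pm2
  i3 := hI.pm3
  i4 := hI.pm6

namespace IsGrMatrixPreideal

variable {ι κ : Type*} {A B C : Matrix ι ι R}

theorem matMem_iff (hI : IsGrMatrixPreideal 𝒜 I) {k : ℕ} (e f : ι ≃ Fin k) :
    MatMem I A ↔ (⟨k, A.submatrix e.symm f.symm⟩ : SqMat R) ∈ I := by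
  refine ⟨?_, fun h => ⟨k, e, f, h⟩⟩
  rintro ⟨k', e', f', h⟩
  obtain rfl : k' = k := Fin.equiv_iff_eq.1 ⟨e'.symm.trans e⟩
  simpa [Function.comp_def] using hI.i4 _ (e.symm.trans e') (f.symm.trans f') h

theorem matMem_fin (hI : IsGrMatrixPreideal 𝒜 I) {n : ℕ} {A : Matrix (Fin n) (Fin n) R} :
    MatMem I A ↔ (⟨n, A⟩ : SqMat R) ∈ I :=
  hI.matMem_iff (Equiv.refl _) (Equiv.refl _)

theorem matMem_fromBlocks_iff_diagSum (hI : IsGrMatrixPreideal 𝒜 I) {m n : ℕ}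
    {A : Matrix (Fin m) (Fin m) R} {B : Matrix (Fin n) (Fin n) R} :
    MatMem I (fromBlocks A 0 0 B) ↔ (⟨m + n, diagSum A B⟩ : SqMat R) ∈ I :=
  hI.matMem_iff finSumFinEquiv finSumFinEquiv

theorem matMem_mul [IsMulGrading 𝒜] (hI : IsGrMatrixPreideal 𝒜 I) [Fintype ι] [Fintype κ]
    {L : Matrix ι κ R} {S : Matrix κ ι R} {α β : ι → Γ} {lam : κ → Γ}
    (hL : IsHomogMatrix 𝒜 L α lam) (hS : IsHomogMatrix 𝒜 S lam β)
    (hcard : Fintype.card κ < Fintype.card ι) : MatMem I (L * S) := by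
  let e := (Fintype.equivFin ι).symm
  let c := (Fintype.equivFin κ).symm
  refine ⟨_, e.symm, e.symm, hI.i1 _ ⟨_, _, (hL.mul hS).submatrix e e⟩ fun hfull => ?_⟩
  refine hcard.not_ge (hfull _ (L.submatrix e c) (S.submatrix c e) _ _ _ (hL.submatrix e c)
    (hS.submatrix c e) ?_)
  rw [submatrix_mul_equiv]
  rfl

theorem matMem_colSum (hI : IsGrMatrixPreideal 𝒜 I) {c : ι} (h : IsColSum c A B C) {α β : ι → Γ}
    (hA : IsHomogMatrix 𝒜 A α β) (hB : IsHomogMatrix 𝒜 B α β) (hAI : MatMem I A)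
    (hBI : MatMem I B) : MatMem I C := by
  obtain ⟨k, e, f, hAI⟩ := hAI
  rw [hI.matMem_iff e f] at hBI ⊢
  exact hI.i2 _ _ _ hAI hBI ⟨⟨_, _, hA.submatrix e.symm f.symm, hB.submatrix e.symm f.symm⟩,
    isDetSum_iff.2 (.inl ⟨_, h.submatrix e.symm f.symm⟩)⟩

theorem matMem_rowSum (hI : IsGrMatrixPreideal 𝒜 I) {r : ι} (h : IsColSum r Aᵀ Bᵀ Cᵀ)
    {α β : ι → Γ} (hA : IsHomogMatrix 𝒜 A α β) (hB : IsHomogMatrix 𝒜 B α β) (hAI : MatMem I A)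
    (hBI : MatMem I B) : MatMem I C := by
  obtain ⟨k, e, f, hAI⟩ := hAI
  rw [hI.matMem_iff e f] at hBI ⊢
  exact hI.i2 _ _ _ hAI hBI ⟨⟨_, _, hA.submatrix e.symm f.symm, hB.submatrix e.symm f.symm⟩,
    isDetSum_iff.2 (.inr ⟨_, h.submatrix f.symm e.symm⟩)⟩

theorem matMem_fromBlocks_diagonal (hI : IsGrMatrixPreideal 𝒜 I) [Finite κ] {D : Matrix κ κ R}
    {α β : κ → Γ} (hA : MatMem I A) (hD : IsHomogMatrix 𝒜 D α β) :
    MatMem I (fromBlocks A 0 0 D) := by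
  obtain ⟨k, e, f, hA⟩ := hA
  obtain ⟨l, ⟨g⟩⟩ := Finite.exists_equiv_fin κ
  have h := hI.matMem_fromBlocks_iff_diagSum.2
    (hI.i3 _ (D.submatrix g.symm g.symm) hA ⟨_, _, hD.submatrix g.symm g.symm⟩)
  rw [← matMem_submatrix (e.symm.sumCongr g.symm) (f.symm.sumCongr g.symm)]
  convert h using 1
  ext (i | i) (j | j) <;> rfl

/-- The matrices whose diagonal sum with `D` lies in `I`. -/
def colon (𝒜 : Γ → AddSubgroup R) (I : Set (SqMat R)) (D : Matrix κ κ R) : Set (SqMat R) :=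
  {p | IsHomogSq 𝒜 p.2 ∧ MatMem I (fromBlocks p.2 0 0 D)}

theorem isGrMatrixPreideal_colon (hI : IsGrMatrixPreideal 𝒜 I) [Finite κ] {D : Matrix κ κ R}
    {α β : κ → Γ} (hD : IsHomogMatrix 𝒜 D α β) : IsGrMatrixPreideal 𝒜 (colon 𝒜 I D) where
  subset_homog p hp := hp.1
  i1 A hA hfull :=
    ⟨hA, hI.matMem_fromBlocks_diagonal (hI.matMem_fin.2 (hI.i1 A hA hfull)) hD⟩
  i2 A B C hA hB h := by
    refine ⟨h.isHomogSq, ?_⟩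
    obtain ⟨⟨α', β', hAh, hBh⟩, hC⟩ := h
    have hAD := IsHomogMatrix.fromBlocks hAh .zero .zero hD
    have hBD := IsHomogMatrix.fromBlocks hBh .zero .zero hD
    obtain ⟨c, h⟩ | ⟨r, h⟩ := isDetSum_iff.1 hC
    · exact hI.matMem_colSum (h.fromBlocks_zero D) hAD hBD hA.2 hB.2
    · refine hI.matMem_rowSum (r := .inl r) ?_ hAD hBD hA.2 hB.2
      simpa only [fromBlocks_transpose, transpose_zero] using h.fromBlocks_zero Dᵀ
  i3 {m n} A B hA hB := by
    refine ⟨hA.1.diagSum hB, ?_⟩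
    obtain ⟨α', β', hB⟩ := hB
    have h := hI.matMem_fromBlocks_diagonal hA.2 hB
    let e : (Fin m ⊕ κ) ⊕ Fin n ≃ Fin (m + n) ⊕ κ :=
      (Equiv.sumAssoc _ _ _).trans <| ((Equiv.refl _).sumCongr (Equiv.sumComm _ _)).trans <|
        (Equiv.sumAssoc _ _ _).symm.trans (finSumFinEquiv.sumCongr (Equiv.refl _))
    rw [← matMem_submatrix e e]
    convert h using 1
    ext ((i | i) | i) ((j | j) | j) <;> simp [e, diagSum]
  i4 A e f hA := by
    obtain ⟨⟨α', β', hAh⟩, hA⟩ := hA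
    refine ⟨⟨_, _, IsHomogMatrix.submatrix hAh e f⟩, ?_⟩
    rw [← matMem_submatrix (e.sumCongr (Equiv.refl κ)) (f.sumCongr (Equiv.refl κ))] at hA
    convert hA using 1
    ext (i | i) (j | j) <;> rfl

end IsGrMatrixPreideal

theorem isGrFull_of_submatrix {n : ℕ} {A : Matrix (Fin n) (Fin n) R} (e f : Equiv.Perm (Fin n))
    (h : IsGrFull 𝒜 (A.submatrix e f)) : IsGrFull 𝒜 A := by
  rintro r P Q α lam β hP hQ rfl
  exact h r (P.submatrix e id) (Q.submatrix id f) _ _ _ (IsHomogMatrix.submatrix hP e id)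
    (IsHomogMatrix.submatrix hQ id f) (submatrix_mul _ _ _ _ _ Function.bijective_id)

theorem isGrFull_of_diagSum [IsMulGrading 𝒜] {m n : ℕ} {A : Matrix (Fin m) (Fin m) R}
    {B : Matrix (Fin n) (Fin n) R} (hB : IsHomogSq 𝒜 B) (h : IsGrFull 𝒜 (diagSum A B)) :
    IsGrFull 𝒜 A := by
  obtain ⟨α', β', hB⟩ := hB
  rintro r P Q α lam β hP hQ rfl
  have hmul : diagSum (P * Q) B = diagSum P B * diagSum Q (1 : Matrix (Fin n) (Fin n) R) := by
    simp [diagSum, fromBlocks_multiply]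
  exact Nat.le_of_add_le_add_right (h _ _ _ _ _ _ (IsHomogMatrix.diagSum hP hB)
    (IsHomogMatrix.diagSum hQ .one) hmul)

/-- The square homogeneous matrices which are not gr-full. -/
def nonfullMatrices (𝒜 : Γ → AddSubgroup R) : Set (SqMat R) :=
  {p | IsHomogSq 𝒜 p.2 ∧ ¬ IsGrFull 𝒜 p.2}

theorem IsDetSumOf.diagSum [IsMulGrading 𝒜] {p : SqMat R}
    (h : IsDetSumOf 𝒜 (nonfullMatrices 𝒜) p) {n : ℕ} {B : Matrix (Fin n) (Fin n) R}
    (hB : IsHomogSq 𝒜 B) : IsDetSumOf 𝒜 (nonfullMatrices 𝒜) ⟨p.1 + n, diagSum p.2 B⟩ := by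
  induction h with
  | base p hp => exact .base _ ⟨hp.1.diagSum hB, mt (isGrFull_of_diagSum hB) hp.2⟩
  | step A A' C _ _ h ihA ihA' => exact .step _ _ _ ihA ihA' (h.diagSum hB)

theorem IsDetSumOf.submatrix {p : SqMat R} (h : IsDetSumOf 𝒜 (nonfullMatrices 𝒜) p)
    (e f : Equiv.Perm (Fin p.1)) :
    IsDetSumOf 𝒜 (nonfullMatrices 𝒜) ⟨p.1, p.2.submatrix e f⟩ := by
  induction h with
  | base p hp =>
    obtain ⟨⟨α, β, hp⟩, hfull⟩ := hp
    exact .base _ ⟨⟨_, _, IsHomogMatrix.submatrix hp e f⟩, mt (isGrFull_of_submatrix e f) hfull⟩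
  | step A B C _ _ h ihA ihB => exact .step _ _ _ (ihA e f) (ihB e f) (h.submatrix e f)

theorem isGrMatrixPreideal_isDetSumOf [IsMulGrading 𝒜] :
    IsGrMatrixPreideal 𝒜 {p | IsDetSumOf 𝒜 (nonfullMatrices 𝒜) p} where
  subset_homog p hp := by
    cases hp with
    | base p hp => exact hp.1
    | step A B C _ _ h => exact h.isHomogSq
  i1 A hA hfull := .base _ ⟨hA, hfull⟩
  i2 A B C hA hB h := IsDetSumOf.step A B C hA hB h
  i3 A B hA hB := IsDetSumOf.diagSum hA hB
  i4 A e f hA := IsDetSumOf.submatrix hA e f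

theorem IsGrMatrixPreideal.sUnion {c : Set (Set (SqMat R))} (hc : IsChain (· ⊆ ·) c)
    (hne : c.Nonempty) (h : ∀ I ∈ c, IsGrMatrixPreideal 𝒜 I) : IsGrMatrixPreideal 𝒜 (⋃₀ c) where
  subset_homog := fun p ⟨J, hJ, hp⟩ => (h J hJ).subset_homog p hp
  i1 A hA hfull := have ⟨J, hJ⟩ := hne; ⟨J, hJ, (h J hJ).i1 A hA hfull⟩
  i2 := by
    rintro n A B C ⟨J, hJ, hA⟩ ⟨J', hJ', hB⟩ hC
    obtain hle | hle := hc.total hJ hJ'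
    · exact ⟨J', hJ', (h J' hJ').i2 A B C (hle hA) hB hC⟩
    · exact ⟨J, hJ, (h J hJ).i2 A B C hA (hle hB) hC⟩
  i3 := fun A B ⟨J, hJ, hA⟩ hB => ⟨J, hJ, (h J hJ).i3 A B hA hB⟩
  i4 := fun A e f ⟨J, hJ, hA⟩ => ⟨J, hJ, (h J hJ).i4 A e f hA⟩

/-! ### Existence of gr-prime matrix ideals -/

/-- A gr-matrix preideal containing no identity matrix. -/
structure IsProperPreideal (𝒜 : Γ → AddSubgroup R) (I : Set (SqMat R)) : Prop where
  isGrMatrixPreideal : IsGrMatrixPreideal 𝒜 I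
  one_notMem : ∀ n : ℕ, (⟨n, (1 : Matrix (Fin n) (Fin n) R)⟩ : SqMat R) ∉ I

theorem IsProperPreideal.exists_maximal (hI : IsProperPreideal 𝒜 I) :
    ∃ M, I ⊆ M ∧ Maximal (IsProperPreideal 𝒜) M := by
  refine zorn_subset_nonempty {J | IsProperPreideal 𝒜 J} (fun c hc hchain hne => ?_) I hI
  refine ⟨⋃₀ c, ⟨.sUnion hchain hne fun J hJ => (hc hJ).isGrMatrixPreideal, ?_⟩,
    fun J hJ => Set.subset_sUnion_of_mem hJ⟩
  rintro n ⟨J, hJ, hn⟩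
  exact (hc hJ).one_notMem n hn

theorem IsProperPreideal.not_matMem_one (hI : IsProperPreideal 𝒜 I) {ι : Type*} [DecidableEq ι] :
    ¬ MatMem I (1 : Matrix ι ι R) := by
  intro h
  have := h.finite
  obtain ⟨k, ⟨e⟩⟩ := Finite.exists_equiv_fin ι
  rw [hI.isGrMatrixPreideal.matMem_iff e e, submatrix_one_equiv] at h
  exact hI.one_notMem k h

theorem mem_of_maximal {M : Set (SqMat R)} (hM : Maximal (IsProperPreideal 𝒜) M) {m n : ℕ}
    {A : Matrix (Fin m) (Fin m) R} {D : Matrix (Fin n) (Fin n) R} (hA : IsHomogSq 𝒜 A)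
    (hD : IsHomogSq 𝒜 D)
    (hone : ∀ k, ¬ MatMem M (fromBlocks (1 : Matrix (Fin k) (Fin k) R) 0 0 D))
    (hAD : MatMem M (fromBlocks A 0 0 D)) : (⟨m, A⟩ : SqMat R) ∈ M := by
  obtain ⟨α, β, hD⟩ := hD
  have hMpre := hM.prop.isGrMatrixPreideal
  have hcolon : IsProperPreideal 𝒜 (IsGrMatrixPreideal.colon 𝒜 M D) :=
    ⟨hMpre.isGrMatrixPreideal_colon hD, fun k hk => hone k hk.2⟩
  refine hM.le_of_ge hcolon (fun p hp => ⟨hMpre.subset_homog p hp, ?_⟩) ⟨hA, hAD⟩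
  exact hMpre.matMem_fromBlocks_diagonal (hMpre.matMem_fin.2 hp) hD

theorem isGrPrimeMatrixIdeal_of_maximal [IsMulGrading 𝒜] {M : Set (SqMat R)}
    (hM : Maximal (IsProperPreideal 𝒜) M) : IsGrPrimeMatrixIdeal 𝒜 M where
  subset_homog := hM.prop.isGrMatrixPreideal.subset_homog
  pm1 := hM.prop.isGrMatrixPreideal.i1
  pm2 := hM.prop.isGrMatrixPreideal.i2
  pm3 := hM.prop.isGrMatrixPreideal.i3
  pm4 {m n} A B hA hB hAB := by
    rw [← hM.prop.isGrMatrixPreideal.matMem_fromBlocks_iff_diagSum] at hAB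
    by_cases hone : ∀ k, ¬ MatMem M (fromBlocks (1 : Matrix (Fin k) (Fin k) R) 0 0 B)
    · exact .inl (mem_of_maximal hM hA hB hone hAB)
    push Not at hone
    obtain ⟨k, hk⟩ := hone
    refine .inr (mem_of_maximal hM hB (D := (1 : Matrix (Fin k) (Fin k) R))
      ⟨1, 1, IsHomogMatrix.one⟩ ?_ (matMem_fromBlocks_diagonal_comm.1 hk))
    intro l
    rw [fromBlocks_one]
    exact hM.prop.not_matMem_one
  pm5 := hM.prop.one_notMem 1
  pm6 := hM.prop.isGrMatrixPreideal.i4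

theorem exists_isGrPrimeMatrixIdeal [IsMulGrading 𝒜]
    (h : ∀ n : ℕ, ¬ IsDetSumOf 𝒜 (nonfullMatrices 𝒜)
      (⟨n, (1 : Matrix (Fin n) (Fin n) R)⟩ : SqMat R)) :
    ∃ P : Set (SqMat R), IsGrPrimeMatrixIdeal 𝒜 P := by
  obtain ⟨P, -, hP⟩ := IsProperPreideal.exists_maximal ⟨isGrMatrixPreideal_isDetSumOf, h⟩
  exact ⟨P, isGrPrimeMatrixIdeal_of_maximal hP⟩

theorem IsGrPrimeMatrixIdeal.isProperPreideal [IsMulGrading 𝒜] (hI : IsGrPrimeMatrixIdeal 𝒜 I) :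
    IsProperPreideal 𝒜 I := by
  refine ⟨hI.isGrMatrixPreideal, fun n hn => ?_⟩
  have hone (n : ℕ) : IsHomogSq 𝒜 (1 : Matrix (Fin n) (Fin n) R) := ⟨1, 1, IsHomogMatrix.one⟩
  have hsum (n : ℕ) :
      diagSum (1 : Matrix (Fin n) (Fin n) R) (1 : Matrix (Fin 1) (Fin 1) R) = 1 := by
    simp [diagSum]
  induction n with
  | zero => exact hI.pm5 (hsum 0 ▸ hI.pm3 _ _ hn (hone 1))
  | succ n ih => exact (hI.pm4 _ _ (hone n) (hone 1) (hsum n ▸ hn)).elim ih hI.pm5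

end Preideal

/-! ### Row and column operations -/

section ColumnOperations

variable {Γ : Type u} [Group Γ] {R : Type v} [Ring R] {𝒜 : Γ → AddSubgroup R} [IsMulGrading 𝒜]
  {I : Set (SqMat R)} {ι κ : Type*}

theorem submatrix_mul_one_submatrix_ne {m n : Type*} [Fintype n] [DecidableEq n]
    (N : Matrix m n R) (j : n) :
    N.submatrix id (Subtype.val : {x // x ≠ j} → n) *
      (1 : Matrix n n R).submatrix (Subtype.val : {x // x ≠ j} → n) id = N.updateCol j 0 := by
  ext i x
  simp only [mul_apply, submatrix_apply, one_apply, id]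
  obtain rfl | hx := eq_or_ne x j
  · rw [updateCol_self]
    exact Finset.sum_eq_zero fun y _ => by rw [if_neg y.2, mul_zero]
  · rw [updateCol_ne hx, Fintype.sum_eq_single ⟨x, hx⟩ fun y hy => ?_, if_pos rfl, mul_one]
    rw [if_neg fun h => hy (Subtype.ext h), mul_zero]

theorem fromRows_add_fromRows {m n : Type*} (A A' : Matrix m ι R) (B B' : Matrix n ι R) :
    fromRows A B + fromRows A' B' = fromRows (A + A') (B + B') := by
  ext (i | i) j <;> rfl

theorem fromCols_add_fromCols {m n : Type*} (A A' : Matrix ι m R) (B B' : Matrix ι n R) :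
    fromCols A B + fromCols A' B' = fromCols (A + A') (B + B') := by
  ext i (j | j) <;> rfl

theorem sum_updateCol_zero {m n : Type*} [Fintype n] [DecidableEq n] (T : Matrix m n R) :
    ∑ j, (0 : Matrix m n R).updateCol j (fun i => T i j) = T := by
  ext i x
  simp [Matrix.sum_apply, updateCol_apply]

theorem isColSum_fromCols_add [DecidableEq κ] {m : Type*} (M : Matrix m ι R)
    (N : Matrix m κ R) (j : κ) (x : m → R) :
    IsColSum (Sum.inr j) (fromCols M N)
      (fromCols M (N.updateCol j 0 + (0 : Matrix m κ R).updateCol j x))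
      (fromCols M (N + (0 : Matrix m κ R).updateCol j x)) where
  eq_of_ne := by
    rintro i (k | k) hk
    · rfl
    · simp [ne_of_apply_ne Sum.inr hk]
  apply_of_ne := by
    rintro i (k | k) hk
    · rfl
    · simp [ne_of_apply_ne Sum.inr hk]
  apply_self i := by simp

namespace IsGrMatrixPreideal

/-- The determinantal sum of the given matrix with the same matrix whose column `j` is replaced
by `L * T j` is the sum; the latter matrix is not gr-full, since column `j` of `fromCols L N` can
be dropped from a factorization through it. -/
theorem matMem_fromCols_add_mul_updateCol [Fintype ι] [Finite κ] [DecidableEq κ]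
    (hI : IsGrMatrixPreideal 𝒜 I)
    {L : Matrix (ι ⊕ κ) ι R} {S : Matrix ι ι R} {N : Matrix (ι ⊕ κ) κ R} {α : ι ⊕ κ → Γ}
    {lam β : ι → Γ} {β' : κ → Γ} (hL : IsHomogMatrix 𝒜 L α lam) (hS : IsHomogMatrix 𝒜 S lam β)
    (hN : IsHomogMatrix 𝒜 N α β') {j : κ} {t : ι → R}
    (ht : ∀ i, t i ∈ 𝒜 (lam i * (β' j)⁻¹)) (h : MatMem I (fromCols (L * S) N)) :
    MatMem I (fromCols (L * S) (N + L * (0 : Matrix ι κ R).updateCol j t)) := by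
  classical
  cases nonempty_fintype κ
  have hT : IsHomogMatrix 𝒜 ((0 : Matrix ι κ R).updateCol j t) lam β' :=
    IsHomogMatrix.zero.updateCol ht
  have hupdate : L * (0 : Matrix ι κ R).updateCol j t =
      (0 : Matrix (ι ⊕ κ) κ R).updateCol j (L *ᵥ t) := by
    rw [mul_updateCol, Matrix.mul_zero]
  let S' : Matrix (ι ⊕ {x // x ≠ j}) (ι ⊕ κ) R :=
    fromBlocks S ((0 : Matrix ι κ R).updateCol j t) 0 ((1 : Matrix κ κ R).submatrix (↑) id)
  have hfactor : fromCols (L * S) (N.updateCol j 0 + L * (0 : Matrix ι κ R).updateCol j t) =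
      fromCols L (N.submatrix id (Subtype.val : {x // x ≠ j} → κ)) * S' := by
    rw [fromCols_mul_fromBlocks, submatrix_mul_one_submatrix_ne, Matrix.mul_zero, add_zero,
      add_comm (L * _)]
  have hcard : Fintype.card (ι ⊕ {x // x ≠ j}) < Fintype.card (ι ⊕ κ) := by
    have : 0 < Fintype.card κ := Fintype.card_pos_iff.2 ⟨j⟩
    simp only [Fintype.card_sum, Fintype.card_subtype_compl, Fintype.card_unique]
    omega
  have hsum := isColSum_fromCols_add (L * S) N j (L *ᵥ t)
  rw [← hupdate] at hsum
  refine hI.matMem_colSum hsum ((hL.mul hS).fromCols hN)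
    ((hL.mul hS).fromCols ((hN.updateCol fun _ => zero_mem _).add (hL.mul hT))) h ?_
  rw [hfactor]
  exact hI.matMem_mul (hL.fromCols (hN.submatrix id Subtype.val))
    (hS.fromBlocks hT .zero (IsHomogMatrix.one.submatrix Subtype.val id)) hcard

theorem matMem_fromCols_add_mul [Fintype ι] [Finite κ] (hI : IsGrMatrixPreideal 𝒜 I)
    {L : Matrix (ι ⊕ κ) ι R} {S : Matrix ι ι R} {T : Matrix ι κ R} {N : Matrix (ι ⊕ κ) κ R}
    {α : ι ⊕ κ → Γ} {lam β : ι → Γ} {β' : κ → Γ} (hL : IsHomogMatrix 𝒜 L α lam)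
    (hS : IsHomogMatrix 𝒜 S lam β) (hT : IsHomogMatrix 𝒜 T lam β')
    (hN : IsHomogMatrix 𝒜 N α β') (h : MatMem I (fromCols (L * S) N)) :
    MatMem I (fromCols (L * S) (N + L * T)) := by
  classical
  cases nonempty_fintype κ
  have hpartial (s : Finset κ) : MatMem I (fromCols (L * S)
      (N + L * ∑ j ∈ s, (0 : Matrix ι κ R).updateCol j (fun i => T i j))) := by
    induction s using Finset.induction_on with
    | empty => simpa using h
    | insert j s hj ih =>
      rw [Finset.sum_insert hj, add_comm (updateCol _ _ _), Matrix.mul_add, ← add_assoc]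
      refine hI.matMem_fromCols_add_mul_updateCol hL hS (hN.add (hL.mul ?_)) (fun i => hT i j) ih
      exact IsHomogMatrix.sum fun j _ => IsHomogMatrix.zero.updateCol fun i => hT i j
  rw [← sum_updateCol_zero T]
  exact hpartial _

theorem matMem_fromBlocks_add_mul [Fintype ι] [Finite κ] (hI : IsGrMatrixPreideal 𝒜 I)
    {A : Matrix ι ι R} {B : Matrix ι κ R} {C : Matrix κ ι R} {D : Matrix κ κ R} {T : Matrix ι κ R}
    {α β : ι → Γ} {α' β' : κ → Γ} (hA : IsHomogMatrix 𝒜 A α β) (hB : IsHomogMatrix 𝒜 B α β')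
    (hC : IsHomogMatrix 𝒜 C α' β) (hD : IsHomogMatrix 𝒜 D α' β') (hT : IsHomogMatrix 𝒜 T β β')
    (h : MatMem I (fromBlocks A B C D)) :
    MatMem I (fromBlocks A (B + A * T) C (D + C * T)) := by
  classical
  have hsum := hI.matMem_fromCols_add_mul (hA.fromRows hC) .one hT (hB.fromRows hD)
    (by rwa [Matrix.mul_one, fromCols_fromRows_eq_fromBlocks])
  rwa [Matrix.mul_one, fromRows_mul, fromRows_add_fromRows, fromCols_fromRows_eq_fromBlocks] at hsum

theorem matMem_fromBlocks_zero₂₁_add [Finite ι] [Finite κ] (hI : IsGrMatrixPreideal 𝒜 I)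
    {A : Matrix ι ι R} {B C : Matrix ι κ R} {D : Matrix κ κ R}
    {α β : ι → Γ} {α' β' : κ → Γ} (hA : IsHomogMatrix 𝒜 A α β) (hB : IsHomogMatrix 𝒜 B α β')
    (hC : IsHomogMatrix 𝒜 C α β') (hD : IsHomogMatrix 𝒜 D α' β')
    (h : MatMem I (fromBlocks A B 0 D)) : MatMem I (fromBlocks A (B + C) 0 D) := by
  classical
  cases nonempty_fintype ι
  have hsum := hI.matMem_fromCols_add_mul (L := fromRows (1 : Matrix ι ι R) 0) (S := A)
    (IsHomogMatrix.one.fromRows .zero) hA hC (hB.fromRows hD)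
    (by rwa [fromRows_mul, Matrix.one_mul, Matrix.zero_mul, fromCols_fromRows_eq_fromBlocks])
  rwa [fromRows_mul, fromRows_mul, Matrix.one_mul, Matrix.zero_mul, Matrix.one_mul, Matrix.zero_mul,
    fromRows_add_fromRows, add_zero, fromCols_fromRows_eq_fromBlocks] at hsum

end IsGrMatrixPreideal

namespace IsGrPrimeMatrixIdeal

variable {A : Matrix ι ι R} {B : Matrix ι κ R} {D : Matrix κ κ R} {α β : ι → Γ} {α' β' : κ → Γ}

theorem matMem_fromBlocks_zero₂₁_iff (hI : IsGrPrimeMatrixIdeal 𝒜 I) [Finite ι] [Finite κ]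
    (hA : IsHomogMatrix 𝒜 A α β) (hB : IsHomogMatrix 𝒜 B α β') (hD : IsHomogMatrix 𝒜 D α' β') :
    MatMem I (fromBlocks A B 0 D) ↔ MatMem I A ∨ MatMem I D := by
  have hI' := hI.isGrMatrixPreideal
  cases nonempty_fintype ι
  cases nonempty_fintype κ
  have hdiag : MatMem I (fromBlocks A B 0 D) ↔ MatMem I (fromBlocks A 0 0 D) := by
    constructor <;> intro h
    · simpa using hI'.matMem_fromBlocks_zero₂₁_add hA hB hB.neg hD h
    · simpa using hI'.matMem_fromBlocks_zero₂₁_add hA .zero hB hD h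
  rw [hdiag]
  refine ⟨fun h => ?_, ?_⟩
  · let e := Fintype.equivFin ι
    let e' := Fintype.equivFin κ
    rw [hI'.matMem_iff e e, hI'.matMem_iff e' e']
    refine hI.pm4 _ _ ⟨_, _, hA.submatrix e.symm e.symm⟩ ⟨_, _, hD.submatrix e'.symm e'.symm⟩ ?_
    rw [← hI'.matMem_fromBlocks_iff_diagSum, ← matMem_submatrix (e.sumCongr e') (e.sumCongr e')]
    convert h using 1
    ext (i | i) (j | j) <;> simp
  · rintro (h | h)
    · exact hI'.matMem_fromBlocks_diagonal h hD
    · exact matMem_fromBlocks_diagonal_comm.1 (hI'.matMem_fromBlocks_diagonal h hA)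

variable {A B : Matrix ι ι R} {α β lam : ι → Γ}

/-- The matrix `fromBlocks B 1 0 A` is turned into `fromBlocks 1 0 A (-(A * B))` by a swap of
columns and a column operation. -/
theorem matMem_neg_mul [Fintype ι] (hI : IsGrPrimeMatrixIdeal 𝒜 I)
    (hA : IsHomogMatrix 𝒜 A α lam) (hB : IsHomogMatrix 𝒜 B lam β) (h : MatMem I A ∨ MatMem I B) :
    MatMem I (-(A * B)) := by
  classical
  have hswap : MatMem I (fromBlocks 1 B A 0) := by
    rw [← matMem_submatrix (Equiv.refl _) (Equiv.sumComm ι ι)]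
    simpa using (hI.matMem_fromBlocks_zero₂₁_iff hB .one hA).2 h.symm
  have hop := hI.isGrMatrixPreideal.matMem_fromBlocks_add_mul .one hB hA .zero hB.neg hswap
  rw [← matMem_submatrix (Equiv.sumComm ι ι) (Equiv.sumComm ι ι)] at hop
  have htri : MatMem I (fromBlocks (-(A * B)) A 0 1) := by
    simpa using hop
  obtain h | h := (hI.matMem_fromBlocks_zero₂₁_iff (hA.mul hB).neg hA .one).1 htri
  exacts [h, (hI.isProperPreideal.not_matMem_one h).elim]

theorem matMem_neg_iff [Finite ι] (hI : IsGrPrimeMatrixIdeal 𝒜 I) (hA : IsHomogMatrix 𝒜 A α β) :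
    MatMem I (-A) ↔ MatMem I A := by
  classical
  cases nonempty_fintype ι
  have hneg {B : Matrix ι ι R} (hB : IsHomogMatrix 𝒜 B α β) (h : MatMem I B) : MatMem I (-B) := by
    simpa using hI.matMem_neg_mul .one hB (.inr h)
  exact ⟨fun h => by simpa using hneg hA.neg h, hneg hA⟩

theorem matMem_mul [Fintype ι] (hI : IsGrPrimeMatrixIdeal 𝒜 I) (hA : IsHomogMatrix 𝒜 A α lam)
    (hB : IsHomogMatrix 𝒜 B lam β) (h : MatMem I A ∨ MatMem I B) : MatMem I (A * B) :=
  (hI.matMem_neg_iff (hA.mul hB)).1 (hI.matMem_neg_mul hA hB h)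

end IsGrPrimeMatrixIdeal
end ColumnOperations

/-! ### Fractions over a gr-prime matrix ideal -/

section Fractions

variable {Γ : Type u} [Group Γ] {R : Type v} [Ring R] {𝒜 : Γ → AddSubgroup R}

/-- A bundled gr-prime matrix ideal, so that the objects built from it can be indexed by it. -/
structure GrPrimeMatrixIdeal (𝒜 : Γ → AddSubgroup R) where
  carrier : Set (SqMat R)
  isPrime : IsGrPrimeMatrixIdeal 𝒜 carrier

/-- A formal expression `row * den⁻¹ * col` of degree `γ`, where `den` is a homogeneous matrix
outside the gr-prime matrix ideal `P`. Its index type `ι` is finite in all applications. -/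
@[ext]
structure GrFraction (P : GrPrimeMatrixIdeal 𝒜) (γ : Γ) (ι : Type) where
  rowDeg : ι → Γ
  colDeg : ι → Γ
  den : Matrix ι ι R
  row : Matrix Unit ι R
  col : Matrix ι Unit R
  isHomog_den : IsHomogMatrix 𝒜 den rowDeg colDeg
  isHomog_row : IsHomogMatrix 𝒜 row (fun _ => γ) colDeg
  isHomog_col : IsHomogMatrix 𝒜 col rowDeg (fun _ => 1)
  den_notMem : ¬ MatMem P.carrier den

namespace GrFraction

variable {P : GrPrimeMatrixIdeal 𝒜} {γ δ : Γ} {ι κ : Type}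

/-- The denominator of `a` bordered by its row and its column. -/
def border (a : GrFraction P γ ι) : Matrix (ι ⊕ Unit) (ι ⊕ Unit) R :=
  fromBlocks a.den a.col a.row 0

/-- The fraction `a` counts as zero. Over a division ring, the bordered matrix is singular iff its
Schur complement `-(row * den⁻¹ * col)` vanishes. -/
def IsZero (a : GrFraction P γ ι) : Prop :=
  MatMem P.carrier a.border

theorem isHomog_border (a : GrFraction P γ ι) :
    IsHomogMatrix 𝒜 a.border (Sum.elim a.rowDeg fun _ => γ) (Sum.elim a.colDeg fun _ => 1) :=
  a.isHomog_den.fromBlocks a.isHomog_col a.isHomog_row .zero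

theorem isHomog_border_mul_right (a : GrFraction P γ ι) (δ : Γ) :
    IsHomogMatrix 𝒜 a.border (Sum.elim (fun i => a.rowDeg i * δ) fun _ => γ * δ)
      (Sum.elim (fun i => a.colDeg i * δ) fun _ => δ) :=
  (a.isHomog_den.mul_right δ).fromBlocks (by simpa using a.isHomog_col.mul_right δ)
    (a.isHomog_row.mul_right δ) .zero

/-- Transport of a fraction along an equivalence of index types. -/
@[simps]
def reindex (a : GrFraction P γ ι) (e : κ ≃ ι) : GrFraction P γ κ where
  rowDeg := a.rowDeg ∘ e
  colDeg := a.colDeg ∘ e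
  den := a.den.submatrix e e
  row := a.row.submatrix id e
  col := a.col.submatrix e id
  isHomog_den := a.isHomog_den.submatrix e e
  isHomog_row := a.isHomog_row.submatrix id e
  isHomog_col := a.isHomog_col.submatrix e id
  den_notMem := (matMem_submatrix e e).not.2 a.den_notMem

/-- Transport of a fraction along an equality of degrees. -/
@[simps]
def cast (h : γ = δ) (a : GrFraction P γ ι) : GrFraction P δ ι where
  __ := a
  isHomog_row := h ▸ a.isHomog_row

/-- The fraction with the numerator row of `a` replaced by `f`. -/
@[simps]
def withRow (a : GrFraction P γ ι) (f : Matrix Unit ι R)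
    (hf : IsHomogMatrix 𝒜 f (fun _ => δ) a.colDeg) : GrFraction P δ ι where
  __ := a
  row := f
  isHomog_row := hf

/-- The negative of a fraction. -/
@[simps]
def neg (a : GrFraction P γ ι) : GrFraction P γ ι where
  __ := a
  row := -a.row
  isHomog_row := a.isHomog_row.neg

theorem neg_neg (a : GrFraction P γ ι) : a.neg.neg = a :=
  GrFraction.ext rfl rfl rfl (_root_.neg_neg a.row) rfl

theorem isZero_reindex {a : GrFraction P γ ι} (e : κ ≃ ι) : (a.reindex e).IsZero ↔ a.IsZero := by
  rw [IsZero, IsZero, ← matMem_submatrix (e.sumCongr (.refl Unit)) (e.sumCongr (.refl Unit))]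
  refine iff_of_eq (congrArg _ ?_)
  ext (i | i) (j | j) <;> rfl

theorem IsZero.withRow_add {a : GrFraction P γ ι} {f g : Matrix Unit ι R}
    {hf : IsHomogMatrix 𝒜 f (fun _ => δ) a.colDeg} {hg : IsHomogMatrix 𝒜 g (fun _ => δ) a.colDeg}
    (hfz : (a.withRow f hf).IsZero) (hgz : (a.withRow g hg).IsZero) :
    (a.withRow (f + g) (hf.add hg)).IsZero := by
  refine P.isPrime.isGrMatrixPreideal.matMem_rowSum (r := .inr ()) ?_
    (a.withRow f hf).isHomog_border (a.withRow g hg).isHomog_border hfz hgz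
  constructor
  · rintro (i | i) (j | j) hj
    exacts [rfl, (hj rfl).elim, rfl, (hj rfl).elim]
  · rintro (i | i) (j | j) hj
    exacts [rfl, (hj rfl).elim, rfl, (hj rfl).elim]
  · rintro (_ | _)
    exacts [rfl, (add_zero 0).symm]

variable [IsMulGrading 𝒜]

theorem IsZero.neg [Finite ι] {a : GrFraction P γ ι} (ha : a.IsZero) : a.neg.IsZero := by
  classical
  cases nonempty_fintype ι
  have hone : IsHomogMatrix 𝒜 (fromBlocks 1 0 0 (-1) : Matrix (ι ⊕ Unit) (ι ⊕ Unit) R)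
      (Sum.elim a.rowDeg fun _ => γ) (Sum.elim a.rowDeg fun _ => γ) :=
    IsHomogMatrix.one.fromBlocks .zero .zero IsHomogMatrix.one.neg
  have hmul := P.isPrime.matMem_mul hone a.isHomog_border (.inr ha)
  rw [border, fromBlocks_multiply] at hmul
  simpa [IsZero, border] using hmul

theorem isHomog_neg_col_mul_row (a : GrFraction P γ ι) (b : GrFraction P δ κ) :
    IsHomogMatrix 𝒜 (-(a.col * b.row)) (fun i => a.rowDeg i * δ) b.colDeg :=
  ((a.isHomog_col.mul_right δ).mul (by simpa using b.isHomog_row)).neg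

theorem isHomog_smul_row {r : R} (hr : r ∈ 𝒜 γ) (a : GrFraction P δ ι) :
    IsHomogMatrix 𝒜 (r • a.row) (fun _ => γ * δ) a.colDeg := by
  intro i j
  rw [mul_assoc]
  exact IsMulGrading.mul_mem hr (a.isHomog_row i j)

/-- The inverse of a fraction which does not count as zero: the lower right entry of the inverse of
the bordered matrix is `-(row * den⁻¹ * col)⁻¹`. -/
@[simps]
def inv (a : GrFraction P γ ι) (ha : ¬ a.IsZero) : GrFraction P γ⁻¹ (ι ⊕ Unit) where
  rowDeg := Sum.elim (fun i => a.rowDeg i * γ⁻¹) fun _ => γ * γ⁻¹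
  colDeg := Sum.elim (fun i => a.colDeg i * γ⁻¹) fun _ => γ⁻¹
  den := a.border
  row := fromCols 0 1
  col := fromRows 0 (-1)
  isHomog_den := a.isHomog_border_mul_right γ⁻¹
  isHomog_row := IsHomogMatrix.zero.fromCols .one
  isHomog_col := IsHomogMatrix.zero.fromRows (by simpa using IsHomogMatrix.one.neg)
  den_notMem := ha

theorem isHomog_neg_row_zero (a : GrFraction P γ ι) (ha : ¬ a.IsZero) :
    IsHomogMatrix 𝒜 (fromCols (-a.row) 0) (fun _ => γ * γ⁻¹) (a.inv ha).colDeg :=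
  (a.isHomog_row.mul_right γ⁻¹).neg.fromCols .zero

section Operations

variable [Finite ι] [Finite κ]

/-- The sum of two fractions, with block diagonal denominator. -/
@[simps]
def add (a : GrFraction P γ ι) (b : GrFraction P γ κ) : GrFraction P γ (ι ⊕ κ) where
  rowDeg := Sum.elim a.rowDeg b.rowDeg
  colDeg := Sum.elim a.colDeg b.colDeg
  den := fromBlocks a.den 0 0 b.den
  row := fromCols a.row b.row
  col := fromRows a.col b.col
  isHomog_den := a.isHomog_den.fromBlocks .zero .zero b.isHomog_den
  isHomog_row := a.isHomog_row.fromCols b.isHomog_row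
  isHomog_col := a.isHomog_col.fromRows b.isHomog_col
  den_notMem h :=
    ((P.isPrime.matMem_fromBlocks_zero₂₁_iff a.isHomog_den .zero b.isHomog_den).1 h).elim
      a.den_notMem b.den_notMem

/-- The product of two fractions, coming from the formula
`[[A, -X], [0, B]]⁻¹ = [[A⁻¹, A⁻¹ * X * B⁻¹], [0, B⁻¹]]` for `X = a.col * b.row`. -/
@[simps]
def mul (a : GrFraction P γ ι) (b : GrFraction P δ κ) : GrFraction P (γ * δ) (ι ⊕ κ) where
  rowDeg := Sum.elim (fun i => a.rowDeg i * δ) b.rowDeg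
  colDeg := Sum.elim (fun i => a.colDeg i * δ) b.colDeg
  den := fromBlocks a.den (-(a.col * b.row)) 0 b.den
  row := fromCols a.row 0
  col := fromRows 0 b.col
  isHomog_den := (a.isHomog_den.mul_right δ).fromBlocks (isHomog_neg_col_mul_row a b) .zero
    b.isHomog_den
  isHomog_row := (a.isHomog_row.mul_right δ).fromCols .zero
  isHomog_col := IsHomogMatrix.zero.fromRows b.isHomog_col
  den_notMem h :=
    ((P.isPrime.matMem_fromBlocks_zero₂₁_iff (a.isHomog_den.mul_right δ)
      (isHomog_neg_col_mul_row a b) b.isHomog_den).1 h).elim a.den_notMem b.den_notMem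

theorem isZero_add_withRow_zero {a : GrFraction P γ ι} {b : GrFraction P δ κ} :
    (a.add (b.withRow 0 (δ := γ) .zero)).IsZero ↔ a.IsZero := by
  let e : (ι ⊕ κ) ⊕ Unit ≃ κ ⊕ ι ⊕ Unit :=
    ((Equiv.sumComm ι κ).sumCongr (.refl Unit)).trans (Equiv.sumAssoc κ ι Unit)
  have hperm : (a.add (b.withRow 0 (δ := γ) .zero)).border =
      (fromBlocks b.den (fromCols 0 b.col) 0 a.border).submatrix e e := by
    ext ((i | i) | i) ((j | j) | j) <;> rfl
  rw [IsZero, hperm, matMem_submatrix, P.isPrime.matMem_fromBlocks_zero₂₁_iff b.isHomog_den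
    (IsHomogMatrix.zero.fromCols b.isHomog_col) a.isHomog_border, or_iff_right b.den_notMem, IsZero]

theorem add_comm_eq_reindex (a : GrFraction P γ ι) (b : GrFraction P γ κ) :
    b.add a = (a.add b).reindex (Equiv.sumComm κ ι) := by
  ext (i | i) <;> try rfl
  all_goals rename_i j; obtain j | j := j <;> rfl

theorem isZero_withRow_zero_add {a : GrFraction P δ ι} {b : GrFraction P γ κ} :
    ((a.withRow 0 (δ := γ) .zero).add b).IsZero ↔ b.IsZero := by
  rw [add_comm_eq_reindex, isZero_reindex, isZero_add_withRow_zero]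

theorem IsZero.add {a : GrFraction P γ ι} {b : GrFraction P γ κ} (ha : a.IsZero)
    (hb : b.IsZero) : (a.add b).IsZero := by
  have hsum := IsZero.withRow_add (a := a.add b) (f := fromCols a.row 0) (g := fromCols 0 b.row)
    (isZero_add_withRow_zero.2 ha) (isZero_withRow_zero_add.2 hb)
  simp only [fromCols_add_fromCols, add_zero, zero_add] at hsum
  exact hsum

theorem IsZero.of_add {a : GrFraction P γ ι} {b : GrFraction P γ κ} (hab : (a.add b).IsZero)
    (hb : b.IsZero) : a.IsZero := by
  have hsum := IsZero.withRow_add (a := a.add b) (f := fromCols a.row b.row)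
    (g := fromCols 0 (-b.row)) hab (isZero_withRow_zero_add.2 hb.neg)
  simp only [fromCols_add_fromCols, add_zero, add_neg_cancel] at hsum
  exact isZero_add_withRow_zero.1 hsum

theorem IsZero.mul_right {a : GrFraction P γ ι} (ha : a.IsZero) (b : GrFraction P δ κ) :
    (a.mul b).IsZero := by
  classical
  cases nonempty_fintype ι
  cases nonempty_fintype κ
  let e : (ι ⊕ κ) ⊕ Unit ≃ (ι ⊕ Unit) ⊕ κ :=
    (Equiv.sumAssoc ι κ Unit).trans <|
      ((Equiv.refl ι).sumCongr (Equiv.sumComm κ Unit)).trans (Equiv.sumAssoc ι Unit κ).symm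
  let X : Matrix ((ι ⊕ Unit) ⊕ κ) ((ι ⊕ Unit) ⊕ κ) R := fromBlocks a.border 0 0 1
  let Y : Matrix ((ι ⊕ Unit) ⊕ κ) ((ι ⊕ Unit) ⊕ κ) R :=
    fromBlocks (fromBlocks 1 0 0 0) (fromRows 0 (-b.row)) (fromCols 0 b.col) b.den
  have hX := (a.isHomog_border_mul_right δ).fromBlocks .zero .zero (.one (α := b.rowDeg))
  have hY : IsHomogMatrix 𝒜 Y _ _ :=
    IsHomogMatrix.fromBlocks (IsHomogMatrix.one.fromBlocks .zero .zero .zero)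
      (IsHomogMatrix.zero.fromRows b.isHomog_row.neg)
      (IsHomogMatrix.zero (β := fun i => a.colDeg i * δ).fromCols b.isHomog_col) b.isHomog_den
  have hfactor : (a.mul b).border = (X * Y).submatrix e e := by
    simp only [X, Y, border, fromBlocks_multiply]
    ext ((i | i) | i) ((j | j) | j) <;> simp [e, mul_apply]
  rw [IsZero, hfactor, matMem_submatrix]
  exact P.isPrime.matMem_mul hX hY (.inl <|
    P.isPrime.isGrMatrixPreideal.matMem_fromBlocks_diagonal ha (.one (α := b.rowDeg)))

theorem IsZero.mul_left {b : GrFraction P δ κ} (hb : b.IsZero) (a : GrFraction P γ ι) :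
    (a.mul b).IsZero := by
  classical
  cases nonempty_fintype ι
  cases nonempty_fintype κ
  let e := Equiv.sumAssoc ι κ Unit
  let X : Matrix (ι ⊕ κ ⊕ Unit) (ι ⊕ κ ⊕ Unit) R :=
    fromBlocks a.den (fromCols 0 (-a.col)) (fromRows 0 a.row) (fromBlocks 1 0 0 0)
  let Y : Matrix (ι ⊕ κ ⊕ Unit) (ι ⊕ κ ⊕ Unit) R := fromBlocks 1 0 0 b.border
  have hX : IsHomogMatrix 𝒜 X _ _ :=
    IsHomogMatrix.fromBlocks (a.isHomog_den.mul_right δ)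
      (IsHomogMatrix.zero.fromCols (by simpa using a.isHomog_col.neg.mul_right δ))
      (IsHomogMatrix.zero.fromRows (a.isHomog_row.mul_right δ))
      ((IsHomogMatrix.one (α := b.rowDeg)).fromBlocks .zero .zero .zero)
  have hone : IsHomogMatrix 𝒜 (1 : Matrix ι ι R) (fun i => a.colDeg i * δ)
      fun i => a.colDeg i * δ := .one
  have hY := hone.fromBlocks .zero .zero b.isHomog_border
  have hfactor : (a.mul b).border = (X * Y).submatrix e e := by
    simp only [X, Y, border, fromBlocks_multiply]
    ext ((i | i) | i) ((j | j) | j) <;> simp [e, mul_apply]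
  rw [IsZero, hfactor, matMem_submatrix]
  exact P.isPrime.matMem_mul hX hY (.inr <| matMem_fromBlocks_diagonal_comm.1 <|
    P.isPrime.isGrMatrixPreideal.matMem_fromBlocks_diagonal hb hone)

end Operations

end GrFraction
end Fractions

/-! ### Equivalence of fractions -/

namespace GrFraction

variable {Γ : Type u} [Group Γ] {R : Type v} [Ring R] {𝒜 : Γ → AddSubgroup R} [IsMulGrading 𝒜]
  {P : GrPrimeMatrixIdeal 𝒜} {γ δ ε : Γ} {ι κ ρ ι' κ' : Type} [Finite ι] [Finite κ] [Finite ρ]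
  [Finite ι'] [Finite κ']

theorem neg_add (a : GrFraction P γ ι) (b : GrFraction P γ κ) :
    (a.add b).neg = a.neg.add b.neg :=
  GrFraction.ext rfl rfl rfl (fromCols_neg a.row b.row) rfl

theorem neg_mul (a : GrFraction P γ ι) (b : GrFraction P δ κ) :
    (a.mul b).neg = a.neg.mul b :=
  GrFraction.ext rfl rfl rfl (by simp [fromCols_neg]) rfl

theorem add_add_add_comm_eq_reindex (a : GrFraction P γ ι) (b : GrFraction P γ κ)
    (c : GrFraction P γ ι') (d : GrFraction P γ κ') :
    (a.add b).add (c.add d) =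
      ((a.add c).add (b.add d)).reindex (Equiv.sumSumSumComm ι κ ι' κ') := by
  refine GrFraction.ext ?_ ?_ ?_ ?_ ?_
  · ext ((i | i) | (i | i)) <;> rfl
  · ext ((i | i) | (i | i)) <;> rfl
  · ext ((i | i) | (i | i)) ((j | j) | (j | j)) <;> rfl
  · ext _ ((j | j) | (j | j)) <;> rfl
  · ext ((i | i) | (i | i)) _ <;> rfl

theorem add_assoc_eq_reindex (a : GrFraction P γ ι) (b : GrFraction P γ κ)
    (c : GrFraction P γ ρ) :
    (a.add b).add c = (a.add (b.add c)).reindex (Equiv.sumAssoc ι κ ρ) := by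
  refine GrFraction.ext ?_ ?_ ?_ ?_ ?_
  · ext ((i | i) | i) <;> rfl
  · ext ((i | i) | i) <;> rfl
  · ext ((i | i) | i) ((j | j) | j) <;> rfl
  · ext _ ((j | j) | j) <;> rfl
  · ext ((i | i) | i) _ <;> rfl

theorem mul_assoc_eq_reindex (a : GrFraction P γ ι) (b : GrFraction P δ κ)
    (c : GrFraction P ε ρ) :
    (a.mul b).mul c =
      ((a.mul (b.mul c)).cast (mul_assoc γ δ ε).symm).reindex (Equiv.sumAssoc ι κ ρ) := by
  refine GrFraction.ext ?_ ?_ ?_ ?_ ?_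
  · ext ((i | i) | i) <;> simp [mul_assoc]
  · ext ((i | i) | i) <;> simp [mul_assoc]
  · ext ((i | i) | i) ((j | j) | j) <;> simp [mul_apply]
  · ext _ ((j | j) | j) <;> rfl
  · ext ((i | i) | i) _ <;> rfl

/-- Two fractions represent the same element: their difference counts as zero. -/
def IsEquiv (a : GrFraction P γ ι) (b : GrFraction P γ κ) : Prop :=
  (a.add b.neg).IsZero

namespace IsEquiv

theorem of_intertwine [Fintype ι] [Fintype κ] {a : GrFraction P γ ι} {b : GrFraction P γ κ}
    (U V : Matrix κ ι R) (hU : IsHomogMatrix 𝒜 U b.rowDeg a.rowDeg)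
    (hV : IsHomogMatrix 𝒜 V b.colDeg a.colDeg) (hden : b.den * V = U * a.den)
    (hrow : b.row * V = a.row) (hcol : U * a.col = b.col) : a.IsEquiv b := by
  classical
  let X : Matrix ((ι ⊕ κ) ⊕ Unit) (ι ⊕ κ) R :=
    fromRows (fromBlocks 1 0 U b.den) (fromCols 0 (-b.row))
  let Y : Matrix (ι ⊕ κ) ((ι ⊕ κ) ⊕ Unit) R :=
    fromCols (fromBlocks a.den 0 (-V) 1) (fromRows a.col 0)
  have hX : IsHomogMatrix 𝒜 X _ _ :=
    (IsHomogMatrix.one.fromBlocks .zero hU b.isHomog_den).fromRows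
      (IsHomogMatrix.zero.fromCols b.isHomog_row.neg)
  have hY : IsHomogMatrix 𝒜 Y _ _ :=
    (a.isHomog_den.fromBlocks .zero hV.neg .one).fromCols (a.isHomog_col.fromRows .zero)
  have hfactor : (a.add b.neg).border = X * Y := by
    simp only [X, Y, fromRows_mul_fromCols, fromBlocks_multiply, fromBlocks_mul_fromRows,
      fromCols_mul_fromBlocks, fromCols_mul_fromRows]
    simp [border, hden, hrow, hcol]
  rw [IsEquiv, IsZero, hfactor]
  exact P.isPrime.isGrMatrixPreideal.matMem_mul hX hY (by simp)

theorem refl (a : GrFraction P γ ι) : a.IsEquiv a := by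
  classical
  cases nonempty_fintype ι
  exact of_intertwine 1 1 .one .one (by simp) (by simp) (by simp)

theorem symm {a : GrFraction P γ ι} {b : GrFraction P γ κ} (h : a.IsEquiv b) : b.IsEquiv a := by
  have hneg := IsZero.neg h
  rwa [neg_add, neg_neg, add_comm_eq_reindex, isZero_reindex] at hneg

theorem add {a : GrFraction P γ ι} {b : GrFraction P γ κ} {a' : GrFraction P γ ι'}
    {b' : GrFraction P γ κ'} (ha : a.IsEquiv a') (hb : b.IsEquiv b') :
    (a.add b).IsEquiv (a'.add b') := by
  have hsum := IsZero.add ha hb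
  rwa [add_add_add_comm_eq_reindex, isZero_reindex, ← neg_add] at hsum

theorem neg {a : GrFraction P γ ι} {b : GrFraction P γ κ} (h : a.IsEquiv b) :
    a.neg.IsEquiv b.neg := by
  have hneg := IsZero.neg h
  rwa [neg_add] at hneg

theorem isZero {a : GrFraction P γ ι} {b : GrFraction P γ κ} (h : a.IsEquiv b)
    (hb : b.IsZero) : a.IsZero :=
  IsZero.of_add h hb.neg

theorem trans {a : GrFraction P γ ι} {b : GrFraction P γ κ} {c : GrFraction P γ ρ}
    (hab : a.IsEquiv b) (hbc : b.IsEquiv c) : a.IsEquiv c := by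
  have hcb : (c.neg.add b).IsZero := by rwa [add_comm_eq_reindex, isZero_reindex]
  have hbb : (b.neg.add b).IsZero := by
    rw [add_comm_eq_reindex, isZero_reindex]
    exact refl b
  have hsum := IsZero.add hab hcb
  rw [add_add_add_comm_eq_reindex, isZero_reindex] at hsum
  exact hsum.of_add hbb

end IsEquiv

theorem isEquiv_reindex (a : GrFraction P γ ι) (e : κ ≃ ι) : (a.reindex e).IsEquiv a := by
  have hperm : (a.reindex e).add a.neg = (a.add a.neg).reindex (e.sumCongr (.refl ι)) := by
    refine GrFraction.ext ?_ ?_ ?_ ?_ ?_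
    · ext (i | i) <;> rfl
    · ext (i | i) <;> rfl
    · ext (i | i) (j | j) <;> rfl
    · ext _ (j | j) <;> rfl
    · ext (i | i) _ <;> rfl
  rw [IsEquiv, hperm, isZero_reindex]
  exact IsEquiv.refl a

theorem add_mul_isEquiv (a : GrFraction P γ ι) (b : GrFraction P γ κ) (c : GrFraction P δ ρ) :
    ((a.add b).mul c).IsEquiv ((a.mul c).add (b.mul c)) := by
  classical
  cases nonempty_fintype ι
  cases nonempty_fintype κ
  cases nonempty_fintype ρ
  let U : Matrix ((ι ⊕ ρ) ⊕ κ ⊕ ρ) ((ι ⊕ κ) ⊕ ρ) R :=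
    fromRows (fromBlocks (fromCols 1 0) 0 0 1) (fromBlocks (fromCols 0 1) 0 0 1)
  have hU (α : ι ⊕ κ → Γ) (τ : ρ → Γ) : IsHomogMatrix 𝒜 U
      (Sum.elim (Sum.elim (α ∘ .inl) τ) (Sum.elim (α ∘ .inr) τ)) (Sum.elim α τ) := by
    rw [← Sum.elim_comp_inl_inr α]
    exact ((IsHomogMatrix.one.fromCols .zero).fromBlocks .zero .zero .one).fromRows
      ((IsHomogMatrix.zero.fromCols .one).fromBlocks .zero .zero .one)
  refine .of_intertwine U U (hU (fun i => Sum.elim a.rowDeg b.rowDeg i * δ) c.rowDeg)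
    (hU (fun i => Sum.elim a.colDeg b.colDeg i * δ) c.colDeg) ?_ ?_ ?_
  · ext ((i | i) | (i | i)) ((j | j) | j) <;> simp [U, mul_apply, one_apply]
  · ext i ((j | j) | j) <;> simp [U, mul_apply, one_apply]
  · ext ((i | i) | (i | i)) j <;> simp [U, mul_apply, one_apply]

theorem mul_add_isEquiv (a : GrFraction P γ ι) (b : GrFraction P δ κ) (c : GrFraction P δ ρ) :
    (a.mul (b.add c)).IsEquiv ((a.mul b).add (a.mul c)) := by
  classical
  cases nonempty_fintype ι
  cases nonempty_fintype κ
  cases nonempty_fintype ρ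
  let U : Matrix (ι ⊕ κ ⊕ ρ) ((ι ⊕ κ) ⊕ ι ⊕ ρ) R :=
    fromCols (fromBlocks 1 0 0 (fromRows 1 0)) (fromBlocks 1 0 0 (fromRows 0 1))
  have hU (α : ι → Γ) (β : κ → Γ) (τ : ρ → Γ) : IsHomogMatrix 𝒜 U
      (Sum.elim α (Sum.elim β τ)) (Sum.elim (Sum.elim α β) (Sum.elim α τ)) :=
    (IsHomogMatrix.one.fromBlocks .zero .zero (IsHomogMatrix.one.fromRows .zero)).fromCols
      (IsHomogMatrix.one.fromBlocks .zero .zero (IsHomogMatrix.zero.fromRows .one))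
  refine .symm (.of_intertwine U U (hU _ _ _) (hU _ _ _) ?_ ?_ ?_)
  · ext (i | (i | i)) ((j | j) | (j | j)) <;> simp [U, mul_apply, one_apply]
  · ext i ((j | j) | (j | j)) <;> simp [U, mul_apply, one_apply]
  · ext (i | (i | i)) j <;> simp [U, mul_apply, one_apply]

theorem mul_neg_isEquiv (a : GrFraction P γ ι) (b : GrFraction P δ κ) :
    (a.mul b.neg).IsEquiv (a.mul b).neg := by
  classical
  cases nonempty_fintype ι
  cases nonempty_fintype κ
  let U : Matrix (ι ⊕ κ) (ι ⊕ κ) R := fromBlocks (-1) 0 0 1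
  refine .symm (.of_intertwine U U ?_ ?_ ?_ ?_ ?_)
  · exact IsHomogMatrix.one.neg.fromBlocks .zero .zero .one
  · exact IsHomogMatrix.one.neg.fromBlocks .zero .zero .one
  · simp [U, fromBlocks_multiply]
  · simp [U, fromCols_mul_fromBlocks, fromCols_neg]
  · simp [U, fromBlocks_mul_fromRows]

theorem IsEquiv.mul {a : GrFraction P γ ι} {a' : GrFraction P γ ι'} {b : GrFraction P δ κ}
    {b' : GrFraction P δ κ'} (ha : a.IsEquiv a') (hb : b.IsEquiv b') :
    (a.mul b).IsEquiv (a'.mul b') := by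
  have hleft : (a.mul b).IsEquiv (a'.mul b) := by
    rw [IsEquiv, neg_mul]
    exact (add_mul_isEquiv a a'.neg b).symm.isZero (IsZero.mul_right ha b)
  have hright : (a'.mul b).IsEquiv (a'.mul b') :=
    (IsEquiv.add (.refl _) (mul_neg_isEquiv a' b').symm).isZero <|
      (mul_add_isEquiv a' b b'.neg).symm.isZero (IsZero.mul_left hb a')
  exact hleft.trans hright

/-- The element `r`, homogeneous of degree `γ`, as the fraction `r * 1⁻¹ * 1`. -/
@[simps]
def ofHomog (P : GrPrimeMatrixIdeal 𝒜) (r : R) (hr : r ∈ 𝒜 γ) : GrFraction P γ Unit where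
  rowDeg _ := 1
  colDeg _ := 1
  den := 1
  row := of fun _ _ => r
  col := 1
  isHomog_den := .one
  isHomog_row _ _ := by simpa using hr
  isHomog_col := .one
  den_notMem := P.isPrime.isProperPreideal.not_matMem_one

theorem isZero_of_row_eq_zero {a : GrFraction P γ ι} (ha : a.row = 0) : a.IsZero := by
  classical
  cases nonempty_fintype ι
  have hfactor : a.border = fromRows (1 : Matrix ι ι R) 0 * fromCols a.den a.col := by
    simp [border, ha]
  rw [IsZero, hfactor]
  exact P.isPrime.isGrMatrixPreideal.matMem_mul
    (IsHomogMatrix.one.fromRows (.zero (α := fun _ => γ)))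
    (a.isHomog_den.fromCols a.isHomog_col) (by simp)

theorem add_isEquiv_of_isZero (a : GrFraction P γ ι) {b : GrFraction P γ κ} (hb : b.IsZero) :
    (a.add b).IsEquiv a := by
  refine .symm ?_
  rw [IsEquiv, neg_add, ← isZero_reindex (Equiv.sumAssoc ι ι κ), ← add_assoc_eq_reindex]
  exact IsZero.add (IsEquiv.refl a) hb.neg

theorem ofHomog_add_isEquiv {r s : R} (hr : r ∈ 𝒜 γ) (hs : s ∈ 𝒜 γ) :
    ((ofHomog P r hr).add (ofHomog P s hs)).IsEquiv (ofHomog P (r + s) (add_mem hr hs)) := by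
  classical
  refine .symm (.of_intertwine (fromRows 1 1) (fromRows 1 1) ?_ ?_ ?_ ?_ ?_)
  · exact IsHomogMatrix.one.fromRows .one
  · exact IsHomogMatrix.one.fromRows .one
  · simp
  · ext i j
    simp [fromCols_mul_fromRows]
  · simp

theorem ofHomog_mul_isEquiv {r : R} (hr : r ∈ 𝒜 γ) (a : GrFraction P δ ι) :
    ((ofHomog P r hr).mul a).IsEquiv (a.withRow (r • a.row) (isHomog_smul_row hr a)) := by
  classical
  cases nonempty_fintype ι
  have hrow : IsHomogMatrix 𝒜 a.row (fun _ => 1 * δ) a.colDeg := by simpa using a.isHomog_row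
  refine .symm (.of_intertwine (fromRows 0 1) (fromRows a.row 1) ?_ ?_ ?_ ?_ ?_)
  · exact IsHomogMatrix.zero.fromRows .one
  · exact hrow.fromRows .one
  · simp [fromBlocks_mul_fromRows]
  · ext i j
    simp [mul_apply]
  · simp

theorem ofHomog_one_mul_isEquiv (a : GrFraction P γ ι) :
    ((ofHomog P (1 : R) IsMulGrading.one_mem).mul a).IsEquiv (a.cast (one_mul γ).symm) := by
  have hcast : a.cast (one_mul γ).symm =
      a.withRow ((1 : R) • a.row) (isHomog_smul_row IsMulGrading.one_mem a) :=
    GrFraction.ext rfl rfl rfl (one_smul R a.row).symm rfl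
  rw [hcast]
  exact ofHomog_mul_isEquiv _ a

theorem ofHomog_mul_ofHomog_isEquiv {r s : R} (hr : r ∈ 𝒜 γ) (hs : s ∈ 𝒜 δ) :
    ((ofHomog P r hr).mul (ofHomog P s hs)).IsEquiv
      (ofHomog P (r * s) (IsMulGrading.mul_mem hr hs)) :=
  ofHomog_mul_isEquiv hr (ofHomog P s hs)

theorem mul_ofHomog_one_isEquiv (a : GrFraction P γ ι) :
    (a.mul (ofHomog P (1 : R) IsMulGrading.one_mem)).IsEquiv (a.cast (mul_one γ).symm) := by
  classical
  cases nonempty_fintype ι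
  have hone (α : ι → Γ) : IsHomogMatrix 𝒜 (1 : Matrix ι ι R) α fun i => α i * 1 := by
    simpa using IsHomogMatrix.one
  have hrow : (of fun _ _ => 1 : Matrix Unit Unit R) = 1 := rfl
  refine .of_intertwine (fromCols 1 a.col) (fromCols 1 0) ?_ ?_ ?_ ?_ ?_
  · exact (hone _).fromCols a.isHomog_col
  · exact (hone _).fromCols .zero
  · simp [fromCols_mul_fromBlocks, hrow]
  · simp
  · simp [fromCols_mul_fromRows]

theorem mul_inv_isEquiv_withRow (a : GrFraction P γ ι) (ha : ¬ a.IsZero) :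
    (a.mul (a.inv ha)).IsEquiv
      ((a.inv ha).withRow (fromCols (-a.row) 0) (a.isHomog_neg_row_zero ha)) := by
  classical
  cases nonempty_fintype ι
  let U : Matrix (ι ⊕ ι ⊕ Unit) (ι ⊕ Unit) R := fromRows (fromCols (-1) 0) 1
  refine .symm (.of_intertwine U U ?_ ?_ ?_ ?_ ?_)
  · exact (IsHomogMatrix.one.neg.fromCols .zero).fromRows .one
  · exact (IsHomogMatrix.one.neg.fromCols .zero).fromRows .one
  · ext (i | (i | i)) (j | j) <;> simp [U, border, mul_apply, one_apply]
  · simp [U, fromCols_mul_fromRows]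
  · simp [U, fromCols_mul_fromRows]

theorem inv_withRow_isEquiv_one (a : GrFraction P γ ι) (ha : ¬ a.IsZero) :
    ((a.inv ha).withRow (fromCols (-a.row) 0) (a.isHomog_neg_row_zero ha)).IsEquiv
      ((ofHomog P (1 : R) IsMulGrading.one_mem).cast (mul_inv_cancel γ).symm) := by
  classical
  cases nonempty_fintype ι
  have hone : IsHomogMatrix 𝒜 (-1 : Matrix Unit Unit R) (fun _ => 1) fun _ => γ * γ⁻¹ := by
    simpa using IsHomogMatrix.one.neg
  have hrow : IsHomogMatrix 𝒜 (-a.row) (fun _ => 1) fun i => a.colDeg i * γ⁻¹ := by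
    simpa using (a.isHomog_row.mul_right γ⁻¹).neg
  refine .of_intertwine (fromCols 0 (-1)) (fromCols (-a.row) 0) ?_ ?_ ?_ ?_ ?_
  · exact IsHomogMatrix.zero.fromCols hone
  · exact hrow.fromCols .zero
  · simp [border, fromCols_mul_fromBlocks]
  · ext i (j | j) <;> simp [mul_apply]
  · simp [fromCols_mul_fromRows]

theorem mul_inv_isEquiv (a : GrFraction P γ ι) (ha : ¬ a.IsZero) :
    (a.mul (a.inv ha)).IsEquiv
      ((ofHomog P (1 : R) IsMulGrading.one_mem).cast (mul_inv_cancel γ).symm) :=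
  (mul_inv_isEquiv_withRow a ha).trans (inv_withRow_isEquiv_one a ha)

end GrFraction

/-! ### The graded division ring of fractions -/

section Components

variable {Γ : Type u} [Group Γ] {R : Type v} [Ring R] {𝒜 : Γ → AddSubgroup R} [IsMulGrading 𝒜]
  {P : GrPrimeMatrixIdeal 𝒜} {γ δ : Γ} {ι κ : Type} [Finite ι] [Finite κ]

namespace GrFraction

theorem IsZero.isEquiv {a : GrFraction P γ ι} {b : GrFraction P γ κ} (ha : a.IsZero)
    (hb : b.IsZero) : a.IsEquiv b :=
  ha.add hb.neg

theorem not_isZero_ofHomog_one : ¬ (ofHomog P (1 : R) IsMulGrading.one_mem).IsZero := by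
  intro hzero
  let X : Matrix (Unit ⊕ Unit) (Unit ⊕ Unit) R := fromBlocks 0 1 1 (-1)
  have hX : IsHomogMatrix 𝒜 X (Sum.elim (fun _ => 1) fun _ => 1)
      (Sum.elim (fun _ => 1) fun _ => 1) :=
    IsHomogMatrix.zero.fromBlocks .one .one IsHomogMatrix.one.neg
  have hinv : X * (ofHomog P (1 : R) IsMulGrading.one_mem).border = 1 := by
    ext (i | i) (j | j) <;> simp [X, border, mul_apply, one_apply]
  have hone := P.isPrime.matMem_mul hX (isHomog_border _) (.inr hzero)
  rw [hinv] at hone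
  exact P.isPrime.isProperPreideal.not_matMem_one hone

/-- The equivalence of fractions of degree `γ`, for index types `Fin n` with `n` arbitrary. -/
def finSetoid (P : GrPrimeMatrixIdeal 𝒜) (γ : Γ) : Setoid (Σ n : ℕ, GrFraction P γ (Fin n)) where
  r a b := a.2.IsEquiv b.2
  iseqv := ⟨fun a => .refl a.2, .symm, .trans⟩

end GrFraction

/-- The component of degree `γ` of the graded division ring of fractions at `P`. -/
def GrComponent (P : GrPrimeMatrixIdeal 𝒜) (γ : Γ) : Type (max u v) :=
  Quotient (GrFraction.finSetoid P γ)

namespace GrComponent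

open GrFraction

/-- The element represented by a fraction. -/
noncomputable def mk (a : GrFraction P γ ι) : GrComponent P γ :=
  Quotient.mk _ ⟨Nat.card ι, a.reindex (Finite.equivFin ι).symm⟩

theorem mk_eq_mk {a : GrFraction P γ ι} {b : GrFraction P γ κ} : mk a = mk b ↔ a.IsEquiv b :=
  ⟨fun h => (isEquiv_reindex a _).symm.trans ((Quotient.exact h).trans (isEquiv_reindex b _)),
    fun h => Quotient.sound ((isEquiv_reindex a _).trans (h.trans (isEquiv_reindex b _).symm))⟩

@[elab_as_elim]
theorem ind {p : GrComponent P γ → Prop} (mk : ∀ (n : ℕ) (a : GrFraction P γ (Fin n)), p (mk a))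
    (x : GrComponent P γ) : p x := by
  obtain ⟨n, a⟩ := x
  have hmk : GrComponent.mk a = Quot.mk _ ⟨n, a⟩ := Quotient.sound (isEquiv_reindex a _)
  exact hmk ▸ mk n a

noncomputable instance : Zero (GrComponent P γ) :=
  ⟨mk (ofHomog P 0 (zero_mem (𝒜 γ)))⟩

noncomputable instance : Add (GrComponent P γ) :=
  ⟨Quotient.lift₂ (fun a b => mk (a.2.add b.2)) fun _ _ _ _ ha hb => mk_eq_mk.2 (ha.add hb)⟩

noncomputable instance : Neg (GrComponent P γ) :=
  ⟨Quotient.lift (fun a => mk a.2.neg) fun _ _ ha => mk_eq_mk.2 ha.neg⟩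

/-- The product of elements of two components, induced by the product of fractions. -/
protected noncomputable def mul :
    GrComponent P γ → GrComponent P δ → GrComponent P (γ * δ) :=
  Quotient.lift₂ (fun a b => mk (a.2.mul b.2)) fun _ _ _ _ ha hb => mk_eq_mk.2 (ha.mul hb)

theorem mk_add_mk (a : GrFraction P γ ι) (b : GrFraction P γ κ) : mk a + mk b = mk (a.add b) :=
  mk_eq_mk.2 ((isEquiv_reindex a _).add (isEquiv_reindex b _))

theorem neg_mk (a : GrFraction P γ ι) : -mk a = mk a.neg :=
  mk_eq_mk.2 (isEquiv_reindex a _).neg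

theorem mk_mul_mk (a : GrFraction P γ ι) (b : GrFraction P δ κ) :
    (mk a).mul (mk b) = mk (a.mul b) :=
  mk_eq_mk.2 ((isEquiv_reindex a _).mul (isEquiv_reindex b _))

theorem mk_reindex (a : GrFraction P γ ι) (e : κ ≃ ι) : mk (a.reindex e) = mk a :=
  mk_eq_mk.2 (isEquiv_reindex a e)

theorem mk_eq_zero {a : GrFraction P γ ι} : mk a = 0 ↔ a.IsZero :=
  have hzero : (ofHomog P 0 (zero_mem (𝒜 γ))).IsZero := isZero_of_row_eq_zero rfl
  mk_eq_mk.trans ⟨fun h => h.isZero hzero, fun h => h.isEquiv hzero⟩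

protected theorem add_assoc (x y z : GrComponent P γ) : x + y + z = x + (y + z) := by
  induction x using ind with | mk _ a
  induction y using ind with | mk _ b
  induction z using ind with | mk _ c
  simp only [mk_add_mk, add_assoc_eq_reindex, mk_reindex]

protected theorem add_comm (x y : GrComponent P γ) : x + y = y + x := by
  induction x using ind with | mk _ a
  induction y using ind with | mk _ b
  rw [mk_add_mk, mk_add_mk, add_comm_eq_reindex, mk_reindex]

protected theorem add_zero (x : GrComponent P γ) : x + 0 = x := by
  induction x using ind with | mk _ a
  exact (mk_add_mk a _).trans (mk_eq_mk.2 (add_isEquiv_of_isZero a (isZero_of_row_eq_zero rfl)))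

protected theorem add_neg_cancel (x : GrComponent P γ) : x + -x = 0 := by
  induction x using ind with | mk _ a
  rw [neg_mk, mk_add_mk, mk_eq_zero]
  exact IsEquiv.refl a

noncomputable instance : AddCommGroup (GrComponent P γ) where
  add_assoc := GrComponent.add_assoc
  zero_add x := (GrComponent.add_comm 0 x).trans x.add_zero
  add_zero := GrComponent.add_zero
  nsmul := nsmulRec
  zsmul := zsmulRec
  neg_add_cancel x := (GrComponent.add_comm (-x) x).trans x.add_neg_cancel
  add_comm := GrComponent.add_comm

protected theorem add_mul (x y : GrComponent P γ) (z : GrComponent P δ) :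
    (x + y).mul z = x.mul z + y.mul z := by
  induction x using ind with | mk _ a
  induction y using ind with | mk _ b
  induction z using ind with | mk _ c
  simp only [mk_add_mk, mk_mul_mk, mk_eq_mk, add_mul_isEquiv]

protected theorem mul_add (x : GrComponent P γ) (y z : GrComponent P δ) :
    x.mul (y + z) = x.mul y + x.mul z := by
  induction x using ind with | mk _ a
  induction y using ind with | mk _ b
  induction z using ind with | mk _ c
  simp only [mk_add_mk, mk_mul_mk, mk_eq_mk, mul_add_isEquiv]

/-- The canonical map from the component of degree `γ` of `R`. -/
noncomputable def ofHomog (P : GrPrimeMatrixIdeal 𝒜) (γ : Γ) : 𝒜 γ →+ GrComponent P γ where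
  toFun r := mk (GrFraction.ofHomog P r.1 r.2)
  map_zero' := rfl
  map_add' r s := ((mk_add_mk _ _).trans (mk_eq_mk.2 (ofHomog_add_isEquiv r.2 s.2))).symm

end GrComponent

end Components

section FractionRing

variable {Γ : Type u} [Group Γ] {R : Type v} [Ring R] {𝒜 : Γ → AddSubgroup R} [IsMulGrading 𝒜]
  {P : GrPrimeMatrixIdeal 𝒜} {γ δ : Γ} {ι κ : Type} [Finite ι] [Finite κ]

/-- The components `GrComponent P γ` indexed by `Additive Γ`, because the graded objects of Mathlib
are graded by additive monoids. -/
abbrev GrComponents (P : GrPrimeMatrixIdeal 𝒜) (i : Additive Γ) : Type (max u v) :=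
  GrComponent P i.toMul

namespace GrComponents

open GrFraction GrComponent

noncomputable instance : GradedMonoid.GOne (GrComponents P) :=
  ⟨GrComponent.ofHomog P 1 ⟨1, IsMulGrading.one_mem⟩⟩

noncomputable instance : GradedMonoid.GMul (GrComponents P) :=
  ⟨fun {i j} x y => GrComponent.mul (γ := i.toMul) (δ := j.toMul) x y⟩

theorem gradedMonoid_mk_cast (h : γ = δ) (a : GrFraction P γ ι) :
    (⟨.ofMul δ, mk (a.cast h)⟩ : GradedMonoid (GrComponents P)) = ⟨.ofMul γ, mk a⟩ := by
  subst h
  rfl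

theorem gradedMonoid_mk_mul_mk (a : GrFraction P γ ι) (b : GrFraction P δ κ) :
    (⟨.ofMul γ, mk a⟩ * ⟨.ofMul δ, mk b⟩ : GradedMonoid (GrComponents P)) =
      ⟨.ofMul (γ * δ), mk (a.mul b)⟩ :=
  congrArg (GradedMonoid.mk (A := GrComponents P) (.ofMul (γ * δ))) (mk_mul_mk a b)

theorem gradedMonoid_ind {p : GradedMonoid (GrComponents P) → Prop}
    (mk : ∀ (γ : Γ) (n : ℕ) (a : GrFraction P γ (Fin n)), p ⟨.ofMul γ, mk a⟩)
    (x : GradedMonoid (GrComponents P)) : p x := by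
  obtain ⟨i, x⟩ := x
  induction x using GrComponent.ind with | mk n a
  exact mk i.toMul n a

noncomputable instance : GradedMonoid.GMonoid (GrComponents P) where
  one_mul x := by
    induction x using gradedMonoid_ind with | mk γ n a
    refine (gradedMonoid_mk_mul_mk _ a).trans ?_
    rw [mk_eq_mk.2 (ofHomog_one_mul_isEquiv a), gradedMonoid_mk_cast]
  mul_one x := by
    induction x using gradedMonoid_ind with | mk γ n a
    refine (gradedMonoid_mk_mul_mk a _).trans ?_
    rw [mk_eq_mk.2 (mul_ofHomog_one_isEquiv a), gradedMonoid_mk_cast]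
  mul_assoc x y z := by
    induction x using gradedMonoid_ind with | mk γ n a
    induction y using gradedMonoid_ind with | mk δ n b
    induction z using gradedMonoid_ind with | mk ε n c
    simp only [gradedMonoid_mk_mul_mk]
    rw [mul_assoc_eq_reindex, mk_reindex, gradedMonoid_mk_cast]

noncomputable instance : DirectSum.GRing (GrComponents P) where
  mul_zero x := by
    induction x using GrComponent.ind with | mk n a
    exact (mk_mul_mk a _).trans (mk_eq_zero.2 (.mul_left (isZero_of_row_eq_zero rfl) a))
  zero_mul x := by
    induction x using GrComponent.ind with | mk n a
    exact (mk_mul_mk _ a).trans (mk_eq_zero.2 (.mul_right (isZero_of_row_eq_zero rfl) a))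
  mul_add x y z := GrComponent.mul_add x y z
  add_mul x y z := GrComponent.add_mul x y z
  natCast n := n • GradedMonoid.GOne.one
  natCast_zero := zero_nsmul _
  natCast_succ n := succ_nsmul _ _
  intCast n := n • GradedMonoid.GOne.one
  intCast_ofNat n := natCast_zsmul _ _
  intCast_negSucc_ofNat n := negSucc_zsmul _ _

end GrComponents
end FractionRing

theorem isInternal_range_of {ι : Type*} [DecidableEq ι] (A : ι → Type*) [∀ i, AddCommGroup (A i)] :
    DirectSum.IsInternal fun i => (DirectSum.of A i).range := by
  let f := DirectSum.map fun i => (DirectSum.of A i).rangeRestrict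
  let g := DirectSum.coeAddMonoidHom fun i => (DirectSum.of A i).range
  have hcomp : g.comp f = AddMonoidHom.id _ := by
    ext i x : 2
    simp [f, g]
  have hbij : Function.Bijective (g ∘ f) := by
    rw [← AddMonoidHom.coe_comp, hcomp]
    exact Function.bijective_id
  have hf : Function.Surjective f :=
    (DirectSum.map_surjective _).2 fun i => (DirectSum.of A i).rangeRestrict_surjective
  exact ⟨hbij.1.of_comp_right hf, hbij.2.of_comp⟩

section FractionRing

variable {Γ : Type u} [Group Γ] {R : Type v} [Ring R] {𝒜 : Γ → AddSubgroup R}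
  [IsMulGrading 𝒜] {γ : Γ}

/-- The `Γ`-graded division ring of fractions at a gr-prime matrix ideal. -/
abbrev GrFractionRing (P : GrPrimeMatrixIdeal 𝒜) : Type (max u v) :=
  DirectSum (Additive Γ) (GrComponents P)

instance (P : GrPrimeMatrixIdeal 𝒜) : Nontrivial (GrFractionRing P) := by
  classical
  refine nontrivial_of_ne 1 0 fun h =>
    GrFraction.not_isZero_ofHomog_one (P := P) (GrComponent.mk_eq_zero.1 ?_)
  rw [DirectSum.one_def, ← map_zero (DirectSum.of (GrComponents P) 0)] at h
  exact DirectSum.of_injective 0 h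

instance : SetLike.GradedMonoid fun i : Additive Γ => 𝒜 i.toMul where
  one_mem := IsMulGrading.one_mem
  mul_mem _ _ _ _ := IsMulGrading.mul_mem

namespace GrFractionRing

variable [DecidableEq Γ] (P : GrPrimeMatrixIdeal 𝒜)

open GrFraction

/-- The homogeneous elements of degree `γ` of the ring of fractions. -/
noncomputable def grading (γ : Γ) : AddSubgroup (GrFractionRing P) :=
  (DirectSum.of (GrComponents P) (.ofMul γ)).range

theorem isInternal_grading : DirectSum.IsInternal (grading P) :=
  isInternal_range_of (GrComponents P)

variable {P}

theorem exists_of_mul_of_eq_one {x : GrComponent P γ} (hx : x ≠ 0) :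
    ∃ y : GrComponent P γ⁻¹, DirectSum.of (GrComponents P) (.ofMul γ) x *
      DirectSum.of (GrComponents P) (.ofMul γ⁻¹) y = 1 := by
  induction x using GrComponent.ind with | mk n a
  have ha : ¬ a.IsZero := GrComponent.mk_eq_zero.not.1 hx
  refine ⟨.mk (a.inv ha), ?_⟩
  rw [DirectSum.of_mul_of, DirectSum.one_def]
  apply DirectSum.of_eq_of_gradedMonoid_eq
  refine (GrComponents.gradedMonoid_mk_mul_mk a _).trans ?_
  rw [GrComponent.mk_eq_mk.2 (mul_inv_isEquiv a ha), GrComponents.gradedMonoid_mk_cast]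
  rfl

theorem isUnit_of_mem_grading {x : GrFractionRing P} (hx : x ∈ grading P γ) (hne : x ≠ 0) :
    IsUnit x := by
  obtain ⟨x, rfl⟩ := hx
  have hx : x ≠ 0 := by
    rintro rfl
    exact hne (map_zero _)
  obtain ⟨y, hxy⟩ := exists_of_mul_of_eq_one hx
  have hy : y ≠ 0 := by
    rintro rfl
    rw [map_zero, mul_zero] at hxy
    exact zero_ne_one hxy
  obtain ⟨z, hyz⟩ := exists_of_mul_of_eq_one hy
  exact ⟨⟨_, _, hxy, left_inv_eq_right_inv hxy hyz ▸ hyz⟩, rfl⟩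

variable (P)

/-- The canonical map to the ring of fractions, from `R` presented as a direct sum. -/
noncomputable def ofDirectSum : (DirectSum (Additive Γ) fun i => 𝒜 i.toMul) →+* GrFractionRing P :=
  DirectSum.toSemiring
    (fun i => (DirectSum.of (GrComponents P) i).comp (GrComponent.ofHomog P i.toMul)) rfl
    fun {i j} r s => by
      simp only [AddMonoidHom.comp_apply, DirectSum.of_mul_of]
      exact congrArg _ ((GrComponent.mk_mul_mk _ _).trans
        (GrComponent.mk_eq_mk.2 (ofHomog_mul_ofHomog_isEquiv r.2 s.2))).symm

/-- The canonical homomorphism from `R` to the graded division ring of fractions at `P`. -/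
noncomputable def grDivRingHom (h𝒜 : DirectSum.IsInternal 𝒜) : GrDivRingHom Γ R 𝒜 :=
  let 𝒜' : Additive Γ → AddSubgroup R := fun i => 𝒜 i.toMul
  let _ : DirectSum.Decomposition 𝒜' := DirectSum.IsInternal.chooseDecomposition 𝒜' h𝒜
  let _ : GradedRing 𝒜' := { }
  { K := GrFractionRing P
    grading := grading P
    internal := isInternal_grading P
    one_mem := ⟨_, rfl⟩
    mul_mem := by
      rintro γ δ _ _ ⟨x, rfl⟩ ⟨y, rfl⟩
      exact ⟨_, (DirectSum.of_mul_of x y).symm⟩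
    isUnit_of_ne := isUnit_of_mem_grading
    φ := (ofDirectSum P).comp (DirectSum.decomposeRingEquiv 𝒜').toRingHom
    map_mem := by
      intro γ r hr
      have hdec : DirectSum.decomposeRingEquiv 𝒜' r = DirectSum.of _ (.ofMul γ) ⟨r, hr⟩ :=
        DirectSum.decompose_of_mem 𝒜' (i := .ofMul γ) hr
      refine ⟨GrComponent.ofHomog P γ ⟨r, hr⟩, ?_⟩
      rw [RingHom.comp_apply]
      exact ((congrArg (ofDirectSum P) hdec).trans (DirectSum.toSemiring_of _ _ _ _ _)).symm }

end GrFractionRing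
end FractionRing

/-- Let `R` be a `Γ`-graded ring.  There exist a `Γ`-graded
division ring `K` and a homomorphism of `Γ`-graded rings `φ : R → K` if and only
if no identity matrix can be expressed as an iterated determinantal sum of square
homogeneous matrices over `R` which are not gr-full. -/
theorem exists_graded_hom_to_graded_division_ring_iff
    {Γ : Type u} [Group Γ] [DecidableEq Γ] {R : Type v} [Ring R]
    (𝒜 : Γ → AddSubgroup R)
    (hinternal : DirectSum.IsInternal 𝒜)
    (hone : (1 : R) ∈ 𝒜 1)
    (hmul : ∀ {γ δ : Γ} {x y : R}, x ∈ 𝒜 γ → y ∈ 𝒜 δ → x * y ∈ 𝒜 (γ * δ)) :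
    Nonempty (GrDivRingHom Γ R 𝒜) ↔
      ∀ n : ℕ, ¬ IsDetSumOf 𝒜 {p : SqMat R | IsHomogSq 𝒜 p.2 ∧ ¬ IsGrFull 𝒜 p.2}
        (⟨n, (1 : Matrix (Fin n) (Fin n) R)⟩ : SqMat R) := by
  constructor
  · rintro ⟨G⟩ n hn
    have := G.isGradedDivision
    refine hn.not_isUnit_map (fun _ _ => G.map_mem) (fun p hp => hp.2) ?_
    simp
  · intro h
    have : IsMulGrading 𝒜 := ⟨hone, hmul⟩
    obtain ⟨P, hP⟩ := exists_isGrPrimeMatrixIdeal h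
    exact ⟨GrFractionRing.grDivRingHom ⟨P, hP⟩ hinternal⟩
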